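/- Let n, k ∈ ℕ with 2 ≤ 2k < n, let L > 0, 0 < δ₁ < δ₂, p > 1 and γ ∈ (0, n−2k). Then there exist μ > 0 and constants C_l > 0 for each 0 ≤ l < 2k (all depending only on n, k, γ, p, L, δ₁, δ₂) such that: for every measurable h on B_{δ₂}(0) with |h(x)| ≤ L a.e., every measurable V with |V(x)| ≤ μ·|x|^{−2k} on B_{δ₂}(0)∖{0}, and every φ ∈ C^{2k}(B_{δ₂}(0)∖{0}) with φ ∈ L^p(B_{δ₂}(0)), satisfying Δ^k φ + h·φ − V·φ = 0 a.e. on B_{δ₂}(0)∖{0} and ∫_{B_{δ₂}(0)} |∇^j φ|² dx < ∞ for all 0 ≤ j ≤ k, one has |x|^{γ+l}·|∇^l φ(x)| ≤ C_l·‖φ‖_{L^p(B_{δ₂}(0))} for all x ∈ B_{δ₁}(0)∖{0} and all 0 ≤ l < 2k. -/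

import Mathlib

/-!
The estimate holds because the bounds `γ (n - 2k - γ)` make `‖x‖^{-γ-2j}`, `j < k`, strict
supersolutions for `-Δ` in the punctured ball: `-Δ ‖x‖^{-γ-2j} ≥ c ‖x‖^{-γ-2(j+1)}`. If
`|Δ^k φ| ≤ η ‖x‖^{-2k} |φ|` with `η ≤ c^k / 2`, the maximum principle applied `k` times, to
`Δ^{k-1} φ, …, Δ φ, φ` in turn, bounds `|φ| ‖x‖^γ` by half of its own supremum plus boundary data
(`comparison`, `sup_bound`). Below a small radius the bounded potential `h` also satisfies this
smallness condition, and so the condition on `V` fixes `μ = c^k / 4`.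

The maximum principle needs control at the puncture, which is where finite energy enters. Since
`∇^k φ` is square integrable, Cauchy-Schwarz bounds its mass on an annulus of radius `r` by
`r^{n/2}`; integrating along rays, and iterating over dyadic annuli, gives
`∫ |φ| = O(r^{n/2+k})` (`mass_decay`). With the interior estimates below this yields
`Δ^j φ = O(‖x‖^{-(n/2-k)-2j})`. As `n/2 - k < n - 2k`, there is an admissible exponent `γ'` strictly
above `n/2 - k`, and adding `ε ‖x‖^{-γ'-2j}` to the supersolutions forces the quotients to tend to
`0` at the puncture; the resulting bounds do not degenerate as `ε → 0`.

The interior estimates, for derivatives of order `l < 2k` in terms of `sup |Δ^k w|` and `∫ |w|`, are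
obtained without the representation formula. Let `χ = Δ^k K`, with `K` a fundamental solution
smoothed near the origin. Then `χ` has compact support and nonzero mass
(`integral_chiK_ne_zero`), and the difference of `χ` and its dyadic rescaling is `Δ^k` of a smooth
compactly supported function (`iterLap_diffK`). Integrating by parts, the averages of `D^l w`
against `χ` at scales `s` and `2s` differ by `O(s^{2k-l})` (`interior_unit_aux`). For solutions the
zeroth order term is absorbed at the maximum of `(1 - |x|)^n |w|` (`absorb_unit`). Applied on balls
of radius `κ ‖x‖` (`local_bound`), this bounds derivatives by local averages of `|φ|`, which Hölder's
inequality controls by the `L^p` norm away from the origin and the pointwise bound on `φ` near it.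
-/

open MeasureTheory Metric Filter Topology Real

noncomputable section

def lap {n : ℕ} (u : EuclideanSpace ℝ (Fin n) → ℝ) : EuclideanSpace ℝ (Fin n) → ℝ :=
  fun x => ∑ i : Fin n, iteratedFDeriv ℝ 2 u x (fun _ => EuclideanSpace.single i 1)

def iterLap {n : ℕ} (k : ℕ) (u : EuclideanSpace ℝ (Fin n) → ℝ) :
    EuclideanSpace ℝ (Fin n) → ℝ :=
  lap^[k] u

def twoStar (n k : ℕ) : ℝ := 2 * n / ((n : ℝ) - 2 * k)

def ank (n k : ℕ) : ℝ :=
  (∏ j ∈ Finset.range (2 * k), ((n : ℝ) + 2 * ((j : ℝ) - (k : ℝ)))) ^ (-(1 : ℝ) / (k : ℝ))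

def Ubub (n k : ℕ) (x : EuclideanSpace ℝ (Fin n)) : ℝ :=
  (1 / (1 + ank n k * ‖x‖ ^ 2)) ^ (((n : ℝ) - 2 * k) / 2)

def BlowUpSetup (n k : ℕ) (M : ℝ) (lam : ℕ → ℝ)
    (u : ℕ → EuclideanSpace ℝ (Fin n) → ℝ) : Prop :=
  (∀ i, 0 < lam i) ∧ Filter.Tendsto lam Filter.atTop (nhds 0) ∧
  (∀ i, ContDiff ℝ (2 * k : ℕ) (u i)) ∧
  (∀ i, ∀ x y : EuclideanSpace ℝ (Fin n), ‖x‖ = ‖y‖ → u i x = u i y) ∧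
  (∀ i, ∀ x ∈ Metric.ball (0 : EuclideanSpace ℝ (Fin n)) 1,
    iterLap k (u i) x - lam i * u i x = |u i x| ^ (twoStar n k - 2) * u i x) ∧
  (∀ i, ∀ x : EuclideanSpace ℝ (Fin n), ‖x‖ = 1 → ∀ j < k,
    iteratedFDeriv ℝ j (u i) x (fun _ => x) = 0) ∧
  (∀ i, ∃ x ∈ Metric.closedBall (0 : EuclideanSpace ℝ (Fin n)) 1, u i x ≠ 0) ∧
  (∀ i, (∫ x in Metric.ball (0 : EuclideanSpace ℝ (Fin n)) 1, |u i x| ^ twoStar n k)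
      ≤ M ^ twoStar n k)

def CLocConv {n : ℕ} (m : ℕ) (S : Set (EuclideanSpace ℝ (Fin n)))
    (f : ℕ → EuclideanSpace ℝ (Fin n) → ℝ) (g : EuclideanSpace ℝ (Fin n) → ℝ) : Prop :=
  ∀ K : Set (EuclideanSpace ℝ (Fin n)), K ⊆ S → IsCompact K → ∀ j ≤ m,
    Filter.Tendsto
      (fun i => ⨆ x : K, ‖iteratedFDeriv ℝ j (f i) (x : EuclideanSpace ℝ (Fin n))
        - iteratedFDeriv ℝ j g (x : EuclideanSpace ℝ (Fin n))‖)
      Filter.atTop (nhds 0)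

def Concentration (n k : ℕ) (u : ℕ → EuclideanSpace ℝ (Fin n) → ℝ)
    (ν : ℕ → ℝ) (ε₀ : ℝ) : Prop :=
  (∀ i, 0 < ν i) ∧ Filter.Tendsto ν Filter.atTop (nhds 0) ∧ (ε₀ = 1 ∨ ε₀ = -1) ∧
  CLocConv (2 * k) {(0 : EuclideanSpace ℝ (Fin n))}ᶜ
    (fun i z => (ν i) ^ (((n : ℝ) - 2 * k) / 2) * u i ((ν i) • z))
    (fun z => ε₀ * Ubub n k z) ∧
  Filter.Tendsto (fun R : ℝ => Filter.limsup (fun i =>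
      ⨆ x : {x : EuclideanSpace ℝ (Fin n) //
        x ∈ Metric.ball (0 : EuclideanSpace ℝ (Fin n)) 1 ∧ R * ν i ≤ ‖x‖},
        ‖(x : EuclideanSpace ℝ (Fin n))‖ ^ (((n : ℝ) - 2 * k) / 2)
          * |u i (x : EuclideanSpace ℝ (Fin n))|) Filter.atTop)
    Filter.atTop (nhds 0)

def Tfun (n k : ℕ) (u : EuclideanSpace ℝ (Fin n) → ℝ) (x : EuclideanSpace ℝ (Fin n)) : ℝ :=
  (((n : ℝ) - 2 * k) / 2) * u x + fderiv ℝ u x x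

def ndS {n : ℕ} (u : EuclideanSpace ℝ (Fin n) → ℝ) (x : EuclideanSpace ℝ (Fin n)) : ℝ :=
  fderiv ℝ u x (‖x‖⁻¹ • x)

def halfLapSq {n : ℕ} (k : ℕ) (u : EuclideanSpace ℝ (Fin n) → ℝ)
    (x : EuclideanSpace ℝ (Fin n)) : ℝ :=
  if k % 2 = 0 then (iterLap (k / 2) u x) ^ 2 else ‖gradient (iterLap (k / 2) u) x‖ ^ 2

def Sfun (n k : ℕ) (u : EuclideanSpace ℝ (Fin n) → ℝ) (x : EuclideanSpace ℝ (Fin n)) : ℝ :=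
  (∑ i ∈ Finset.range (k / 2),
    (-(ndS (iterLap (k - i - 1) u) x) * iterLap i (Tfun n k u) x
      + iterLap (k - i - 1) u x * ndS (iterLap i (Tfun n k u)) x))
  - (if k % 2 = 1 then ndS (iterLap (k / 2) u) x * iterLap (k / 2) (Tfun n k u) x else 0)

def sphVol (n : ℕ) : ℝ :=
  (μH[(n : ℝ) - 1] (Metric.sphere (0 : EuclideanSpace ℝ (Fin n)) 1)).toReal

def Cnk (n k : ℕ) : ℝ :=
  1 / (((n : ℝ) - 2) * sphVol n *
    ∏ i ∈ Finset.Icc 1 (k - 1), (((n : ℝ) - 2 * k + 2 * ((i : ℝ) - 1)) * (2 * (k : ℝ) - 2 * (i : ℝ))))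

/-! ### Laplacian and iterated derivatives -/

/-- The Euclidean space `ℝⁿ`. -/
abbrev Eu (n : ℕ) := EuclideanSpace ℝ (Fin n)

section Laplacian

set_option maxSynthPendingDepth 3

variable {n : ℕ}

/-- The `i`-th standard basis vector. -/
abbrev ei (i : Fin n) : Eu n := EuclideanSpace.single i 1

/-- The trace of a bilinear form in the standard basis, as a continuous linear functional. -/
def traceCLM (n : ℕ) : (Eu n →L[ℝ] Eu n →L[ℝ] ℝ) →L[ℝ] ℝ :=
  ∑ i : Fin n, (ContinuousLinearMap.apply ℝ ℝ (ei i)).comp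
    (ContinuousLinearMap.apply ℝ (Eu n →L[ℝ] ℝ) (ei i))

lemma traceCLM_apply (T : Eu n →L[ℝ] Eu n →L[ℝ] ℝ) :
    traceCLM n T = ∑ i : Fin n, T (ei i) (ei i) := by
  simp [traceCLM]

lemma norm_traceCLM_le : ‖traceCLM n‖ ≤ n := by
  refine ContinuousLinearMap.opNorm_le_bound _ (by positivity) fun T => ?_
  rw [traceCLM_apply]
  calc ‖∑ i : Fin n, T (ei i) (ei i)‖ ≤ ∑ i : Fin n, ‖T (ei i) (ei i)‖ := norm_sum_le _ _
    _ ≤ ∑ i : Fin n, ‖T‖ := by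
        refine Finset.sum_le_sum fun i _ => ?_
        have := T.le_opNorm₂ (ei i) (ei i)
        simpa using this
    _ = n * ‖T‖ := by simp

lemma lap_eq_trace (u : Eu n → ℝ) : lap u = fun x => traceCLM n (fderiv ℝ (fderiv ℝ u) x) := by
  ext x
  simp only [lap, traceCLM_apply]
  exact Finset.sum_congr rfl fun i _ => iteratedFDeriv_two_apply u x _

lemma lap_eq_sum_fderiv {u : Eu n → ℝ} {x : Eu n} (hu : ContDiffAt ℝ 2 u x) :
    lap u x = ∑ i, fderiv ℝ (fun y => fderiv ℝ u y (ei i)) x (ei i) := by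
  rw [lap_eq_trace]
  simp only [traceCLM_apply]
  refine Finset.sum_congr rfl fun i _ => ?_
  have h0 : ContDiffAt ℝ 1 (fderiv ℝ u) x := hu.fderiv_right (m := 1) (by norm_num)
  have h : DifferentiableAt ℝ (fderiv ℝ u) x := h0.differentiableAt (by norm_num)
  rw [(h.hasFDerivAt.clm_apply (hasFDerivAt_const (ei i) x)).fderiv]
  simp

lemma lap_congr {u v : Eu n → ℝ} {x : Eu n} (h : u =ᶠ[𝓝 x] v) : lap u =ᶠ[𝓝 x] lap v := by
  rw [lap_eq_trace, lap_eq_trace]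
  filter_upwards [(h.fderiv (𝕜 := ℝ)).fderiv (𝕜 := ℝ)] with y hy
  rw [hy]

lemma iterLap_succ (k : ℕ) (u : Eu n → ℝ) : iterLap (k + 1) u = lap (iterLap k u) := by
  simp only [iterLap, Function.iterate_succ_apply']

lemma iterLap_succ' (k : ℕ) (u : Eu n → ℝ) : iterLap (k + 1) u = iterLap k (lap u) := by
  simp only [iterLap, Function.iterate_succ_apply]

@[simp] lemma iterLap_zero (u : Eu n → ℝ) : iterLap 0 u = u := rfl

lemma iterLap_congr {u v : Eu n → ℝ} {x : Eu n} (k : ℕ) (h : u =ᶠ[𝓝 x] v) :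
    iterLap k u =ᶠ[𝓝 x] iterLap k v := by
  induction k with
  | zero => simpa using h
  | succ k ih => rw [iterLap_succ, iterLap_succ]; exact lap_congr ih

lemma contDiffAt_lap {u : Eu n → ℝ} {x : Eu n} {m N : WithTop ℕ∞} (hu : ContDiffAt ℝ N u x)
    (hm : m + 2 ≤ N) : ContDiffAt ℝ m (lap u) x := by
  rw [lap_eq_trace]
  have h1 : ContDiffAt ℝ (m + 1) (fderiv ℝ u) x :=
    hu.fderiv_right (by rw [add_assoc, one_add_one_eq_two]; exact hm)
  have h2 : ContDiffAt ℝ m (fderiv ℝ (fderiv ℝ u)) x := h1.fderiv_right le_rfl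
  exact (traceCLM n).contDiff.contDiffAt.comp x h2

lemma contDiffAt_iterLap {u : Eu n → ℝ} {x : Eu n} (k : ℕ) {m N : ℕ} (hu : ContDiffAt ℝ N u x)
    (hm : m + 2 * k ≤ N) : ContDiffAt ℝ m (iterLap k u) x := by
  induction k generalizing m with
  | zero => exact hu.of_le (by exact_mod_cast hm)
  | succ k ih =>
    rw [iterLap_succ]
    exact contDiffAt_lap (N := ((m + 2 : ℕ) : WithTop ℕ∞)) (ih (by omega)) (by push_cast; rfl)

lemma norm_iteratedFDeriv_lap_le {u : Eu n → ℝ} {x : Eu n} {l : ℕ}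
    (hu : ContDiffAt ℝ (l + 2 : ℕ) u x) :
    ‖iteratedFDeriv ℝ l (lap u) x‖ ≤ n * ‖iteratedFDeriv ℝ (l + 2) u x‖ := by
  rw [lap_eq_trace]
  have h1 : ContDiffAt ℝ (l + 1 : ℕ) (fderiv ℝ u) x :=
    hu.fderiv_right (by push_cast; rw [add_assoc, one_add_one_eq_two])
  have h2 : ContDiffAt ℝ l (fderiv ℝ (fderiv ℝ u)) x :=
    h1.fderiv_right (by push_cast; rfl)
  have h := (traceCLM n).norm_iteratedFDeriv_comp_left (f := fderiv ℝ (fderiv ℝ u)) h2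
    le_rfl
  calc _ ≤ ‖traceCLM n‖ * ‖iteratedFDeriv ℝ l (fderiv ℝ (fderiv ℝ u)) x‖ := h
    _ = ‖traceCLM n‖ * ‖iteratedFDeriv ℝ (l + 2) u x‖ := by
      rw [norm_iteratedFDeriv_fderiv, norm_iteratedFDeriv_fderiv]
    _ ≤ _ := by gcongr; exact norm_traceCLM_le

lemma norm_iteratedFDeriv_iterLap_le {u : Eu n → ℝ} {x : Eu n} (j : ℕ) {l : ℕ}
    (hu : ContDiffAt ℝ (l + 2 * j : ℕ) u x) :
    ‖iteratedFDeriv ℝ l (iterLap j u) x‖ ≤ n ^ j * ‖iteratedFDeriv ℝ (l + 2 * j) u x‖ := by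
  induction j generalizing l with
  | zero => simp
  | succ j ih =>
    rw [iterLap_succ]
    have h1 : ContDiffAt ℝ (l + 2 : ℕ) (iterLap j u) x :=
      contDiffAt_iterLap j hu (by omega)
    have h2 := ih (l := l + 2) (hu.of_le (by exact_mod_cast (by omega)))
    have e : l + 2 + 2 * j = l + 2 * (j + 1) := by ring
    rw [e] at h2
    calc _ ≤ _ := norm_iteratedFDeriv_lap_le h1
      _ ≤ n * (n ^ j * ‖iteratedFDeriv ℝ (l + 2 * (j + 1)) u x‖) := by gcongr
      _ = _ := by ring

lemma abs_iterLap_le {u : Eu n → ℝ} {x : Eu n} (j : ℕ) (hu : ContDiffAt ℝ (2 * j : ℕ) u x) :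
    |iterLap j u x| ≤ n ^ j * ‖iteratedFDeriv ℝ (2 * j) u x‖ := by
  have h := norm_iteratedFDeriv_iterLap_le (l := 0) j (by simpa using hu)
  have e : (0 + 2 * j) = 2 * j := by simp
  rw [e] at h
  simpa using h

lemma iteratedFDeriv_comp_affine {u : Eu n → ℝ} {l : ℕ} (hu : ContDiff ℝ l u) (a : Eu n) (s : ℝ)
    (y : Eu n) :
    iteratedFDeriv ℝ l (fun y => u (a + s • y)) y = s ^ l • iteratedFDeriv ℝ l u (a + s • y) := by
  have h1 : ContDiff ℝ l (fun z => u (a + z)) := hu.comp (by fun_prop)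
  have h2 := iteratedFDeriv_comp_const_smul (i := l) s h1
  rw [h2]
  simp [iteratedFDeriv_comp_add_left]

lemma lap_const_mul_comp_affine {u : Eu n → ℝ} (hu : ContDiff ℝ 2 u) (c : ℝ) (a : Eu n) (s : ℝ) :
    lap (fun y => c * u (a + s • y)) = fun y => c * s ^ 2 * lap u (a + s • y) := by
  ext y
  have h1 : ContDiff ℝ 2 (fun y => u (a + s • y)) := hu.comp (by fun_prop)
  simp only [lap]
  have h2 : iteratedFDeriv ℝ 2 (fun y => c * u (a + s • y)) y
      = c • iteratedFDeriv ℝ 2 (fun y => u (a + s • y)) y :=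
    iteratedFDeriv_const_smul_apply (a := c) (f := fun y => u (a + s • y)) h1.contDiffAt
  rw [h2, iteratedFDeriv_comp_affine (l := 2) hu, Finset.mul_sum]
  refine Finset.sum_congr rfl fun i _ => ?_
  simp [smul_smul, mul_assoc]

lemma contDiff_lap {u : Eu n → ℝ} {m N : WithTop ℕ∞} (hu : ContDiff ℝ N u)
    (hm : m + 2 ≤ N) : ContDiff ℝ m (lap u) :=
  contDiff_iff_contDiffAt.2 fun _ => contDiffAt_lap hu.contDiffAt hm

lemma contDiff_iterLap {u : Eu n → ℝ} (k : ℕ) {m N : ℕ} (hu : ContDiff ℝ N u)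
    (hm : m + 2 * k ≤ N) : ContDiff ℝ m (iterLap k u) :=
  contDiff_iff_contDiffAt.2 fun _ => contDiffAt_iterLap k hu.contDiffAt hm

lemma iterLap_const_mul_comp_affine {u : Eu n → ℝ} (k : ℕ) (hu : ContDiff ℝ (2 * k : ℕ) u)
    (c : ℝ) (a : Eu n) (s : ℝ) :
    iterLap k (fun y => c * u (a + s • y))
      = fun y => c * s ^ (2 * k) * iterLap k u (a + s • y) := by
  induction k with
  | zero => simp
  | succ k ih =>
    rw [iterLap_succ, ih (hu.of_le (by exact_mod_cast (by omega))), iterLap_succ]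
    have h := lap_const_mul_comp_affine (contDiff_iterLap (m := 2) k hu (by omega))
      (c * s ^ (2 * k)) a s
    rw [h]
    ext y; ring

lemma lap_sub {u v : Eu n → ℝ} {x : Eu n} (hu : ContDiffAt ℝ 2 u x) (hv : ContDiffAt ℝ 2 v x) :
    lap (fun y => u y - v y) x = lap u x - lap v x := by
  simp only [lap]
  rw [show (fun y => u y - v y) = u - v from rfl, iteratedFDeriv_sub_apply hu hv]
  simp

lemma lap_add {u v : Eu n → ℝ} {x : Eu n} (hu : ContDiffAt ℝ 2 u x) (hv : ContDiffAt ℝ 2 v x) :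
    lap (fun y => u y + v y) x = lap u x + lap v x := by
  simp only [lap]
  rw [show (fun y => u y + v y) = u + v from rfl, iteratedFDeriv_add_apply hu hv]
  simp [Finset.sum_add_distrib]

lemma lap_const_mul {u : Eu n → ℝ} {x : Eu n} (hu : ContDiffAt ℝ 2 u x) (c : ℝ) :
    lap (fun y => c * u y) x = c * lap u x := by
  simp only [lap]
  rw [show (fun y => c * u y) = c • u from rfl, iteratedFDeriv_const_smul_apply hu]
  simp [Finset.mul_sum]

lemma iterLap_sub {u v : Eu n → ℝ} (k : ℕ) (hu : ContDiff ℝ (2 * k : ℕ) u)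
    (hv : ContDiff ℝ (2 * k : ℕ) v) :
    iterLap k (fun y => u y - v y) = fun y => iterLap k u y - iterLap k v y := by
  induction k with
  | zero => simp
  | succ k ih =>
    rw [iterLap_succ, ih (hu.of_le (by exact_mod_cast (by omega)))
      (hv.of_le (by exact_mod_cast (by omega))), iterLap_succ, iterLap_succ]
    ext x
    exact lap_sub (contDiff_iterLap (m := 2) k hu (by omega)).contDiffAt
      (contDiff_iterLap (m := 2) k hv (by omega)).contDiffAt

end Laplacian

/-! ### Integration by parts -/

section Parts

set_option maxSynthPendingDepth 3

open scoped ContDiff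

variable {n : ℕ}

/-- The directional derivative along a fixed vector. -/
def dirD (v : Eu n) (f : Eu n → ℝ) : Eu n → ℝ := fun x => fderiv ℝ f x v

lemma contDiff_dirD {m N : WithTop ℕ∞} {f : Eu n → ℝ} (v : Eu n) (hf : ContDiff ℝ N f)
    (hm : m + 1 ≤ N) : ContDiff ℝ m (dirD v f) := by
  have h : ContDiff ℝ m (fderiv ℝ f) := hf.fderiv_right hm
  exact h.clm_apply contDiff_const

lemma tsupport_dirD (v : Eu n) (f : Eu n → ℝ) : tsupport (dirD v f) ⊆ tsupport f := by
  refine (closure_mono ?_).trans (tsupport_fderiv_subset ℝ (f := f))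
  intro x hx
  contrapose! hx
  simp only [Function.mem_support, not_not] at hx ⊢
  simp [dirD, hx]

lemma dirD_dirD {f : Eu n → ℝ} (hf : ContDiff ℝ 2 f) (u v x : Eu n) :
    dirD u (dirD v f) x = fderiv ℝ (fderiv ℝ f) x u v := by
  have h0 : ContDiff ℝ 1 (fderiv ℝ f) := hf.fderiv_right (m := 1) (by norm_num)
  have h : DifferentiableAt ℝ (fderiv ℝ f) x := (h0.differentiable (by norm_num)) x
  unfold dirD
  rw [(h.hasFDerivAt.clm_apply (hasFDerivAt_const v x)).fderiv]
  simp

lemma dirD_comm {f : Eu n → ℝ} (hf : ContDiff ℝ 2 f) (u v : Eu n) :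
    dirD u (dirD v f) = dirD v (dirD u f) := by
  ext x
  rw [dirD_dirD hf, dirD_dirD hf]
  exact (hf.contDiffAt.isSymmSndFDerivAt (by simp)) u v

lemma lap_eq_sum_dirD {f : Eu n → ℝ} (hf : ContDiff ℝ 2 f) :
    lap f = fun x => ∑ i, dirD (ei i) (dirD (ei i) f) x := by
  ext x
  rw [lap_eq_sum_fderiv hf.contDiffAt]
  rfl

lemma lap_dirD {f : Eu n → ℝ} (hf : ContDiff ℝ 3 f) (v : Eu n) :
    lap (dirD v f) = dirD v (lap f) := by
  have h2 : ContDiff ℝ 2 f := hf.of_le (by norm_num)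
  rw [lap_eq_sum_dirD (contDiff_dirD v hf (by norm_num)), lap_eq_sum_dirD h2]
  ext x
  have h1 : ∀ i : Fin n, ContDiff ℝ 1 (dirD (ei i) (dirD (ei i) f)) := fun i =>
    contDiff_dirD (N := 2) _ (contDiff_dirD (N := 3) _ hf (by norm_num)) (by norm_num)
  have h3 : dirD v (fun x => ∑ i, dirD (ei i) (dirD (ei i) f) x) x
      = ∑ i, dirD v (dirD (ei i) (dirD (ei i) f)) x := by
    unfold dirD at h1 ⊢
    rw [fderiv_fun_sum fun i _ => (h1 i).differentiable (by norm_num) x]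
    simp
  rw [h3]
  refine Finset.sum_congr rfl fun i _ => ?_
  rw [dirD_comm h2 (ei i) v, dirD_comm (contDiff_dirD (N := 3) (ei i) hf (by norm_num)) v (ei i)]

lemma contDiff_lap_infty {f : Eu n → ℝ} (hf : ContDiff ℝ ∞ f) : ContDiff ℝ ∞ (lap f) :=
  contDiff_lap hf (by rfl)

lemma contDiff_iterLap_infty {f : Eu n → ℝ} (k : ℕ) (hf : ContDiff ℝ ∞ f) :
    ContDiff ℝ ∞ (iterLap k f) := by
  induction k with
  | zero => exact hf
  | succ k ih => rw [iterLap_succ]; exact contDiff_lap_infty ih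

lemma tsupport_lap (f : Eu n → ℝ) : tsupport (lap f) ⊆ tsupport f := by
  refine (closure_mono ?_).trans
    ((tsupport_fderiv_subset ℝ (f := fderiv ℝ f)).trans (tsupport_fderiv_subset ℝ (f := f)))
  intro x hx
  contrapose! hx
  simp only [Function.mem_support, not_not] at hx ⊢
  simp [lap_eq_trace, hx]

lemma tsupport_iterLap (k : ℕ) (f : Eu n → ℝ) : tsupport (iterLap k f) ⊆ tsupport f := by
  induction k with
  | zero => exact subset_rfl
  | succ k ih => rw [iterLap_succ]; exact (tsupport_lap _).trans ih

lemma hasCompactSupport_iterLap (k : ℕ) {f : Eu n → ℝ} (hf : HasCompactSupport f) :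
    HasCompactSupport (iterLap k f) :=
  hf.of_isClosed_subset (isClosed_tsupport _) (tsupport_iterLap k f)

lemma hasCompactSupport_dirD (v : Eu n) {f : Eu n → ℝ} (hf : HasCompactSupport f) :
    HasCompactSupport (dirD v f) :=
  hf.of_isClosed_subset (isClosed_tsupport _) (tsupport_dirD v f)

lemma integral_mul_dirD {f g : Eu n → ℝ} (hf : ContDiff ℝ 1 f) (hfc : HasCompactSupport f)
    (hg : ContDiff ℝ 1 g) (v : Eu n) :
    ∫ x, f x * dirD v g x = -∫ x, dirD v f x * g x := by
  have c1 : Continuous (dirD v f) := (contDiff_dirD (m := 0) v hf (by norm_num)).continuous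
  have c2 : Continuous (dirD v g) := (contDiff_dirD (m := 0) v hg (by norm_num)).continuous
  refine integral_mul_fderiv_eq_neg_fderiv_mul_of_integrable ?_ ?_ ?_
    (fun x _ => hf.differentiable (by norm_num) x) (fun x _ => hg.differentiable (by norm_num) x)
  · exact (c1.mul hg.continuous).integrable_of_hasCompactSupport
      ((hasCompactSupport_dirD v hfc).mul_right)
  · exact (hf.continuous.mul c2).integrable_of_hasCompactSupport hfc.mul_right
  · exact (hf.continuous.mul hg.continuous).integrable_of_hasCompactSupport hfc.mul_right

lemma integral_mul_lap {f g : Eu n → ℝ} (hf : ContDiff ℝ 2 f) (hfc : HasCompactSupport f)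
    (hg : ContDiff ℝ 2 g) : ∫ x, f x * lap g x = ∫ x, lap f x * g x := by
  rw [lap_eq_sum_dirD hf, lap_eq_sum_dirD hg]
  simp only [Finset.mul_sum, Finset.sum_mul]
  have d1 : ∀ i : Fin n, ContDiff ℝ 1 (dirD (ei i) f) := fun i =>
    contDiff_dirD _ hf (by norm_num)
  have d2 : ∀ i : Fin n, ContDiff ℝ 1 (dirD (ei i) g) := fun i =>
    contDiff_dirD _ hg (by norm_num)
  have e1 : ∀ i : Fin n, Continuous (dirD (ei i) (dirD (ei i) f)) := fun i =>
    (contDiff_dirD (m := 0) _ (d1 i) (by norm_num)).continuous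
  have e2 : ∀ i : Fin n, Continuous (dirD (ei i) (dirD (ei i) g)) := fun i =>
    (contDiff_dirD (m := 0) _ (d2 i) (by norm_num)).continuous
  rw [integral_finsetSum, integral_finsetSum]
  · refine Finset.sum_congr rfl fun i _ => ?_
    rw [integral_mul_dirD (hf.of_le (by norm_num)) hfc (d2 i),
      integral_mul_dirD (d1 i) (hasCompactSupport_dirD _ hfc) (hg.of_le (by norm_num)), neg_neg]
  · intro i _
    exact ((e1 i).mul hg.continuous).integrable_of_hasCompactSupport
      ((hasCompactSupport_dirD _ (hasCompactSupport_dirD _ hfc)).mul_right)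
  · intro i _
    exact (hf.continuous.mul (e2 i)).integrable_of_hasCompactSupport hfc.mul_right

lemma integral_mul_iterLap (k : ℕ) {f g : Eu n → ℝ} (hf : ContDiff ℝ ∞ f)
    (hfc : HasCompactSupport f) (hg : ContDiff ℝ (2 * k : ℕ) g) :
    ∫ x, iterLap k f x * g x = ∫ x, f x * iterLap k g x := by
  induction k generalizing f with
  | zero => rfl
  | succ k ih =>
    rw [iterLap_succ', iterLap_succ,
      ih (contDiff_lap_infty hf) (hasCompactSupport_iterLap 1 hfc)
        (hg.of_le (by exact_mod_cast (by omega))),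
      integral_mul_lap (by exact_mod_cast contDiff_infty.1 hf 2) hfc
        (contDiff_iterLap (m := 2) k hg (by omega))]

/-- The function obtained from `f` by moving the derivatives `∂_{v 0} ⋯ ∂_{v (l-1)}` onto it by
repeated integration by parts (signs included). -/
def kerD : (l : ℕ) → (Fin l → Eu n) → (Eu n → ℝ) → (Eu n → ℝ)
  | 0, _, f => f
  | l + 1, v, f => kerD l (Fin.tail v) (dirD (-v 0) f)

lemma contDiff_kerD (l : ℕ) (v : Fin l → Eu n) {f : Eu n → ℝ} (hf : ContDiff ℝ ∞ f) :
    ContDiff ℝ ∞ (kerD l v f) := by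
  induction l generalizing f with
  | zero => exact hf
  | succ l ih => exact ih _ (contDiff_dirD _ hf (by rfl))

lemma tsupport_kerD (l : ℕ) (v : Fin l → Eu n) (f : Eu n → ℝ) :
    tsupport (kerD l v f) ⊆ tsupport f := by
  induction l generalizing f with
  | zero => exact subset_rfl
  | succ l ih => exact (ih _ _).trans (tsupport_dirD _ _)

lemma hasCompactSupport_kerD (l : ℕ) (v : Fin l → Eu n) {f : Eu n → ℝ}
    (hf : HasCompactSupport f) : HasCompactSupport (kerD l v f) :=
  hf.of_isClosed_subset (isClosed_tsupport _) (tsupport_kerD l v f)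

lemma kerD_iterLap (l k : ℕ) (v : Fin l → Eu n) {f : Eu n → ℝ} (hf : ContDiff ℝ ∞ f) :
    kerD l v (iterLap k f) = iterLap k (kerD l v f) := by
  have key : ∀ (k : ℕ) (v : Eu n) (f : Eu n → ℝ), ContDiff ℝ ∞ f →
      dirD v (iterLap k f) = iterLap k (dirD v f) := by
    intro k v f hf
    induction k with
    | zero => rfl
    | succ k ih =>
      rw [iterLap_succ, ← lap_dirD (by exact_mod_cast contDiff_infty.1 (contDiff_iterLap_infty k hf) 3), ih, iterLap_succ]
  induction l generalizing f with
  | zero => rfl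
  | succ l ih =>
    simp only [kerD]
    rw [key _ _ _ hf, ih _ (contDiff_dirD _ hf (by rfl))]

lemma norm_iteratedFDeriv_dirD_le {f : Eu n → ℝ} (hf : ContDiff ℝ ∞ f) (m : ℕ) (v x : Eu n) :
    ‖iteratedFDeriv ℝ m (dirD v f) x‖ ≤ ‖v‖ * ‖iteratedFDeriv ℝ (m + 1) f x‖ := by
  have h : ContDiff ℝ ∞ (fderiv ℝ f) := hf.fderiv_right (by rfl)
  have h2 := norm_iteratedFDeriv_clm_apply_const (c := v) (n := m) (h.contDiffAt (x := x))
    (by exact_mod_cast le_top)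
  rwa [norm_iteratedFDeriv_fderiv] at h2

lemma abs_kerD_le (l : ℕ) (v : Fin l → Eu n) {f : Eu n → ℝ} (hf : ContDiff ℝ ∞ f) (x : Eu n) :
    |kerD l v f x| ≤ (∏ i, ‖v i‖) * ‖iteratedFDeriv ℝ l f x‖ := by
  induction l generalizing f with
  | zero => simp [kerD]
  | succ l ih =>
    simp only [kerD]
    refine (ih (Fin.tail v) (contDiff_dirD _ hf (by rfl))).trans ?_
    have h := norm_iteratedFDeriv_dirD_le hf l (-v 0) x
    rw [norm_neg] at h
    calc _ ≤ (∏ i, ‖Fin.tail v i‖) * (‖v 0‖ * ‖iteratedFDeriv ℝ (l + 1) f x‖) := by gcongr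
      _ = _ := by rw [Fin.prod_univ_succ]; simp only [Fin.tail]; ring

lemma integral_mul_iteratedFDeriv (l : ℕ) (v : Fin l → Eu n) {f w : Eu n → ℝ}
    (hf : ContDiff ℝ ∞ f) (hfc : HasCompactSupport f) (hw : ContDiff ℝ l w) :
    ∫ x, f x * iteratedFDeriv ℝ l w x v = ∫ x, kerD l v f x * w x := by
  induction l generalizing f with
  | zero => simp [kerD]
  | succ l ih =>
    have hd : ContDiff ℝ 1 (iteratedFDeriv ℝ l w) :=
      hw.iteratedFDeriv_right (m := 1) (by push_cast; rw [add_comm])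
    have hd' : ContDiff ℝ 1 (fun x => iteratedFDeriv ℝ l w x (Fin.tail v)) :=
      (ContinuousMultilinearMap.apply ℝ (fun _ : Fin l => Eu n) ℝ (Fin.tail v)).contDiff.comp hd
    have e : ∀ x, iteratedFDeriv ℝ (l + 1) w x v
        = dirD (v 0) (fun x => iteratedFDeriv ℝ l w x (Fin.tail v)) x := by
      intro x
      rw [iteratedFDeriv_succ_apply_left]
      have h3 : HasFDerivAt (fun x => iteratedFDeriv ℝ l w x (Fin.tail v))
          ((ContinuousMultilinearMap.apply ℝ (fun _ : Fin l => Eu n) ℝ (Fin.tail v)).comp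
            (fderiv ℝ (iteratedFDeriv ℝ l w) x)) x :=
        (ContinuousMultilinearMap.apply ℝ (fun _ : Fin l => Eu n) ℝ
          (Fin.tail v)).hasFDerivAt.comp x (hd.differentiable (by norm_num) x).hasFDerivAt
      unfold dirD
      rw [h3.fderiv]
      rfl
    simp only [e]
    rw [integral_mul_dirD (hf.of_le (by exact_mod_cast le_top)) hfc hd']
    simp only [kerD]
    rw [← ih (Fin.tail v) (contDiff_dirD _ hf (by rfl)) (hasCompactSupport_dirD _ hfc)
      (hw.of_le (by exact_mod_cast Nat.le_succ l)), ← integral_neg]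
    congr 1
    ext x
    simp [dirD]

end Parts

/-! ### The smoothed fundamental solution -/

section Kernel

set_option maxSynthPendingDepth 3

open scoped ContDiff

variable {n : ℕ}

lemma rpow_norm_eq (a : ℝ) (y : Eu n) : ‖y‖ ^ a = (‖y‖ ^ 2) ^ (a / 2) := by
  rw [← Real.rpow_natCast, ← Real.rpow_mul (norm_nonneg _)]
  congr 1
  push_cast
  ring

lemma contDiffAt_norm_rpow (a : ℝ) {x : Eu n} (hx : x ≠ 0) {m : WithTop ℕ∞} :
    ContDiffAt ℝ m (fun y : Eu n => ‖y‖ ^ a) x := by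
  exact (contDiffAt_norm ℝ hx).rpow_const_of_ne (norm_ne_zero_iff.2 hx)

lemma fderiv_norm_rpow_apply (a : ℝ) {x : Eu n} (hx : x ≠ 0) (v : Eu n) :
    fderiv ℝ (fun y : Eu n => ‖y‖ ^ a) x v = a * (‖x‖ ^ (a - 2) * inner ℝ x v) := by
  have hx' : ‖x‖ ^ 2 ≠ 0 := pow_ne_zero _ (norm_ne_zero_iff.2 hx)
  have h : HasFDerivAt (fun y : Eu n => (‖y‖ ^ 2) ^ (a / 2)) _ x :=
    (hasStrictFDerivAt_norm_sq x).hasFDerivAt.rpow_const (p := a / 2) (Or.inl hx')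
  have e : (fun y : Eu n => ‖y‖ ^ a) = fun y => (‖y‖ ^ 2) ^ (a / 2) :=
    funext fun y => rpow_norm_eq a y
  rw [e, h.fderiv, rpow_norm_eq (a - 2)]
  have e2 : a / 2 - 1 = (a - 2) / 2 := by ring
  rw [e2]
  simp only [smul_apply, innerSL_apply_apply, smul_eq_mul, nsmul_eq_mul]
  push_cast
  ring

lemma inner_ei (x : Eu n) (i : Fin n) : inner ℝ x (ei i) = x i := by
  simp [EuclideanSpace.inner_single_right]

lemma lap_norm_rpow (a : ℝ) {x : Eu n} (hx : x ≠ 0) :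
    lap (fun y : Eu n => ‖y‖ ^ a) x = a * (a + n - 2) * ‖x‖ ^ (a - 2) := by
  rw [lap_eq_sum_fderiv (contDiffAt_norm_rpow a hx)]
  have hpos : 0 < ‖x‖ := norm_pos_iff.2 hx
  have key : ∀ i : Fin n, fderiv ℝ (fun y => fderiv ℝ (fun y : Eu n => ‖y‖ ^ a) y (ei i)) x (ei i)
      = a * (a - 2) * ‖x‖ ^ (a - 4) * (x i) ^ 2 + a * ‖x‖ ^ (a - 2) := by
    intro i
    have e : (fun y => fderiv ℝ (fun y : Eu n => ‖y‖ ^ a) y (ei i)) =ᶠ[𝓝 x]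
        fun y => a * (‖y‖ ^ (a - 2) * innerSL ℝ (ei i) y) := by
      filter_upwards [isOpen_ne.mem_nhds hx] with y hy
      rw [fderiv_norm_rpow_apply a hy, innerSL_apply_apply, real_inner_comm]
    have h1 : HasFDerivAt (fun y : Eu n => ‖y‖ ^ (a - 2)) _ x :=
      ((contDiffAt_norm_rpow (a - 2) hx (m := 1)).differentiableAt (by norm_num)).hasFDerivAt
    have h2 : HasFDerivAt (fun y : Eu n => innerSL ℝ (ei i) y) (innerSL ℝ (ei i)) x :=
      (innerSL ℝ (ei i)).hasFDerivAt
    have h3 : HasFDerivAt (fun y : Eu n => a * (‖y‖ ^ (a - 2) * innerSL ℝ (ei i) y)) _ x :=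
      (h1.mul h2).const_mul a
    rw [e.fderiv_eq, h3.fderiv]
    simp only [smul_apply, add_apply, smul_eq_mul,
      fderiv_norm_rpow_apply (a - 2) hx, innerSL_apply_apply, inner_ei, real_inner_comm x (ei i)]
    have e4 : a - 2 - 2 = a - 4 := by ring
    rw [e4]
    have : (ei i : Eu n) i = 1 := by simp
    rw [this]
    ring
  rw [Finset.sum_congr rfl fun i _ => key i, Finset.sum_add_distrib, ← Finset.mul_sum]
  have hs : ∑ i, x i ^ 2 = ‖x‖ ^ 2 := by
    rw [EuclideanSpace.norm_sq_eq]; simp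
  have hp : ‖x‖ ^ (a - 4) * ‖x‖ ^ 2 = ‖x‖ ^ (a - 2) := by
    rw [← Real.rpow_natCast ‖x‖ 2, ← Real.rpow_add hpos]
    congr 1; push_cast; ring
  rw [hs, mul_assoc, hp]
  simp
  ring

/-- The constants in `Δ^j |x|^a = c_j |x|^{a-2j}`. -/
def radC (n : ℕ) (a : ℝ) (j : ℕ) : ℝ :=
  ∏ i ∈ Finset.range j, ((a - 2 * i) * (a - 2 * i + n - 2))

lemma iterLap_norm_rpow (a : ℝ) (j : ℕ) {x : Eu n} (hx : x ≠ 0) :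
    iterLap j (fun y : Eu n => ‖y‖ ^ a) x = radC n a j * ‖x‖ ^ (a - 2 * j) := by
  induction j generalizing x with
  | zero => simp [radC]
  | succ j ih =>
    have e : iterLap j (fun y : Eu n => ‖y‖ ^ a) =ᶠ[𝓝 x]
        fun y => radC n a j * ‖y‖ ^ (a - 2 * j) := by
      filter_upwards [isOpen_ne.mem_nhds hx] with y hy using ih hy
    rw [iterLap_succ, (lap_congr e).eq_of_nhds, lap_const_mul (contDiffAt_norm_rpow _ hx),
      lap_norm_rpow _ hx, radC, radC, Finset.prod_range_succ]
    have e4 : a - 2 * (j : ℝ) - 2 = a - 2 * ((j + 1 : ℕ) : ℝ) := by push_cast; ring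
    rw [e4]
    ring

/-- A smooth cutoff, equal to `1` near the origin and supported in the ball of radius `1/2`. -/
def cutB (n : ℕ) : ContDiffBump (0 : Eu n) := ⟨1 / 4, 1 / 2, by norm_num, by norm_num⟩

/-- The fundamental solution `|x|^{2k-n}` of `Δ^k` (up to a constant), smoothed near the origin. -/
def regFund (n k : ℕ) (x : Eu n) : ℝ := (1 - cutB n x) * ‖x‖ ^ (2 * (k : ℝ) - n)

/-- The mollifier `χ = Δ^k` of the smoothed fundamental solution. -/
def chiK (n k : ℕ) : Eu n → ℝ := iterLap k (regFund n k)

/-- The difference of the smoothed fundamental solution and its rescaling by a factor `2`, weighted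
so that the two agree where both are homogeneous; hence it has compact support, and its `Δ^k` is
the difference of `χ` and the rescaled `χ`. -/
def diffK (n k : ℕ) (x : Eu n) : ℝ :=
  regFund n k x - 2⁻¹ ^ ((n : ℝ) - 2 * k) * regFund n k (0 + (2⁻¹ : ℝ) • x)

lemma contDiff_regFund (n k : ℕ) : ContDiff ℝ ∞ (regFund n k) := by
  rw [contDiff_iff_contDiffAt]
  intro x
  by_cases hx : x = 0
  · subst hx
    have h : regFund n k =ᶠ[𝓝 0] fun _ => 0 := by
      filter_upwards [(cutB n).eventuallyEq_one] with y hy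
      simp [regFund, hy]
    exact (contDiffAt_const (c := (0 : ℝ))).congr_of_eventuallyEq h
  · exact (contDiffAt_const.sub (cutB n).contDiffAt).mul (contDiffAt_norm_rpow _ hx)

lemma regFund_of_le {k : ℕ} {x : Eu n} (hx : 1 / 2 ≤ ‖x‖) :
    regFund n k x = ‖x‖ ^ (2 * (k : ℝ) - n) := by
  have : cutB n x = 0 := (cutB n).zero_of_le_dist (by simpa [cutB] using hx)
  simp [regFund, this]

lemma regFund_eventuallyEq {k : ℕ} {x : Eu n} (hx : 1 / 2 < ‖x‖) :
    regFund n k =ᶠ[𝓝 x] fun y => ‖y‖ ^ (2 * (k : ℝ) - n) := by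
  have : ∀ᶠ y : Eu n in 𝓝 x, 1 / 2 < ‖y‖ := continuous_norm.continuousAt.eventually_const_lt hx
  filter_upwards [this] with y hy using regFund_of_le hy.le

lemma contDiff_diffK (n k : ℕ) : ContDiff ℝ ∞ (diffK n k) :=
  (contDiff_regFund n k).sub (contDiff_const.mul ((contDiff_regFund n k).comp (by fun_prop)))

lemma iterLap_diffK (n k : ℕ) :
    iterLap k (diffK n k) = fun x => chiK n k x - 2⁻¹ ^ n * chiK n k ((2⁻¹ : ℝ) • x) := by
  have h1 := contDiff_infty.1 (contDiff_regFund n k) (2 * k)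
  unfold diffK
  have h2 : ContDiff ℝ (2 * k : ℕ)
      (fun x => (2⁻¹ : ℝ) ^ ((n : ℝ) - 2 * k) * regFund n k (0 + (2⁻¹ : ℝ) • x)) :=
    contDiff_const.mul (h1.comp (by fun_prop))
  rw [iterLap_sub k h1 h2, iterLap_const_mul_comp_affine k h1]
  ext x
  have e : (2⁻¹ : ℝ) ^ ((n : ℝ) - 2 * k) * 2⁻¹ ^ (2 * k) = 2⁻¹ ^ n := by
    rw [← Real.rpow_natCast, ← Real.rpow_add (by norm_num), ← Real.rpow_natCast]
    congr 1
    push_cast; ring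
  rw [e]
  simp [chiK]

/-- Outside the unit ball both terms of `diffK` are the same homogeneous function and cancel. -/
lemma hasCompactSupport_diffK (n k : ℕ) : tsupport (diffK n k) ⊆ closedBall 0 1 := by
  refine closure_minimal ?_ isClosed_closedBall
  intro x hx
  contrapose! hx
  simp only [mem_closedBall, dist_zero_right, not_le] at hx
  simp only [Function.mem_support, not_not, diffK, zero_add]
  have h2 : ‖(2⁻¹ : ℝ) • x‖ = 2⁻¹ * ‖x‖ := by simp [norm_smul]
  rw [regFund_of_le (by linarith), regFund_of_le (by rw [h2]; linarith), h2,
    Real.mul_rpow (by norm_num) (norm_nonneg _), ← mul_assoc, ← Real.rpow_add (by norm_num)]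
  simp

lemma radC_self {k : ℕ} (hk : 1 ≤ k) : radC n (2 * (k : ℝ) - n) k = 0 := by
  obtain ⟨m, rfl⟩ : ∃ m, k = m + 1 := ⟨k - 1, by omega⟩
  rw [radC, Finset.prod_range_succ]
  push_cast
  ring

lemma radC_ne_zero {m : ℕ} (hn : 2 * (m + 1) < n) : radC n (2 * ((m + 1 : ℕ) : ℝ) - n) m ≠ 0 := by
  rw [radC, Finset.prod_ne_zero_iff]
  intro i hi
  have hi' : i < m := Finset.mem_range.1 hi
  have h1 : (i : ℝ) < m := by exact_mod_cast hi'
  have h2 : 2 * ((m : ℝ) + 1) < n := by exact_mod_cast hn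
  have h3 : (0 : ℝ) ≤ i := by positivity
  push_cast
  exact mul_ne_zero (by apply ne_of_lt; linarith) (by apply ne_of_gt; linarith)

/-- Outside the support of the cutoff the potential is `|x|^{2k-n}`, which is `Δ^k`-harmonic. -/
lemma tsupport_chiK {k : ℕ} (hk : 1 ≤ k) : tsupport (chiK n k) ⊆ closedBall 0 (1 / 2) := by
  refine closure_minimal ?_ isClosed_closedBall
  intro x hx
  contrapose! hx
  simp only [mem_closedBall, dist_zero_right, not_le] at hx
  have hx0 : x ≠ 0 := norm_pos_iff.1 (by linarith)
  simp only [Function.mem_support, not_not, chiK]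
  rw [(iterLap_congr k (regFund_eventuallyEq hx)).eq_of_nhds, iterLap_norm_rpow _ _ hx0,
    radC_self hk, zero_mul]

lemma contDiff_chiK (n k : ℕ) : ContDiff ℝ ∞ (chiK n k) :=
  contDiff_iterLap_infty k (contDiff_regFund n k)

lemma integral_mul_lap_eq_neg {f g : Eu n → ℝ} (hf : ContDiff ℝ 2 f) (hfc : HasCompactSupport f)
    (hg : ContDiff ℝ 2 g) :
    ∫ x, f x * lap g x = -∫ x, ∑ i, dirD (ei i) f x * dirD (ei i) g x := by
  rw [lap_eq_sum_dirD hg]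
  simp only [Finset.mul_sum]
  have d1 : ∀ i : Fin n, ContDiff ℝ 1 (dirD (ei i) f) := fun i =>
    contDiff_dirD _ hf (by norm_num)
  have d2 : ∀ i : Fin n, ContDiff ℝ 1 (dirD (ei i) g) := fun i =>
    contDiff_dirD _ hg (by norm_num)
  have e2 : ∀ i : Fin n, Continuous (dirD (ei i) (dirD (ei i) g)) := fun i =>
    (contDiff_dirD (m := 0) _ (d2 i) (by norm_num)).continuous
  rw [integral_finsetSum, integral_finsetSum, ← Finset.sum_neg_distrib]
  · exact Finset.sum_congr rfl fun i _ => integral_mul_dirD (hf.of_le (by norm_num)) hfc (d2 i) (ei i)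
  · intro i _
    exact ((d1 i).continuous.mul (d2 i).continuous).integrable_of_hasCompactSupport
      ((hasCompactSupport_dirD _ hfc).mul_right)
  · intro i _
    exact (hf.continuous.mul (e2 i)).integrable_of_hasCompactSupport hfc.mul_right

/-- The mollifier has nonzero mass: after integrating by parts against a radial cutoff only the
region where the potential is a multiple of `|x|^{2-n}` contributes, and there the integral is
computed in polar coordinates. -/
lemma integral_chiK_ne_zero {k : ℕ} (hk : 1 ≤ k) (hn : 2 * k < n) : ∫ x, chiK n k x ≠ 0 := by
  obtain ⟨m, rfl⟩ : ∃ m, k = m + 1 := ⟨k - 1, by omega⟩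
  have hnR : 2 * ((m : ℝ) + 1) < n := by exact_mod_cast hn
  set c := radC n (2 * ((m + 1 : ℕ) : ℝ) - n) m with hc
  have hc0 : c ≠ 0 := radC_ne_zero hn
  set G : Eu n → ℝ := iterLap m (regFund n (m + 1)) with hG
  have hGs : ContDiff ℝ ∞ G := contDiff_iterLap_infty m (contDiff_regFund n (m + 1))
  have hGe : ∀ x : Eu n, 1 / 2 < ‖x‖ → G =ᶠ[𝓝 x] fun y => c * ‖y‖ ^ (2 - (n : ℝ)) := by
    intro x hx
    have : ∀ᶠ y : Eu n in 𝓝 x, 1 / 2 < ‖y‖ := continuous_norm.continuousAt.eventually_const_lt hx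
    filter_upwards [this] with y hy
    rw [hG, (iterLap_congr m (regFund_eventuallyEq hy)).eq_of_nhds,
      iterLap_norm_rpow _ _ (norm_pos_iff.1 (by linarith))]
    congr 2
    push_cast; ring
  set ψ : ℝ → ℝ := fun t => smoothTransition (5 - t ^ 2) with hψ
  set η : Eu n → ℝ := fun x => smoothTransition (5 - ‖x‖ ^ 2) with hη
  have hηs : ContDiff ℝ ∞ η := Real.smoothTransition.contDiff.comp
    (contDiff_const.sub (contDiff_norm_sq ℝ))
  have hψs : ContDiff ℝ ∞ ψ := Real.smoothTransition.contDiff.comp (by fun_prop)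
  have hηc : HasCompactSupport η := by
    refine HasCompactSupport.of_support_subset_isCompact (isCompact_closedBall 0 3) ?_
    intro x hx
    contrapose! hx
    simp only [mem_closedBall, dist_zero_right, not_le] at hx
    simp only [Function.mem_support, not_not, hη]
    exact Real.smoothTransition.zero_of_nonpos (by nlinarith)
  have hψc : HasCompactSupport ψ := by
    refine HasCompactSupport.of_support_subset_isCompact (isCompact_closedBall 0 3) ?_
    intro x hx
    contrapose! hx
    simp only [mem_closedBall, dist_zero_right, not_le, Real.norm_eq_abs] at hx
    simp only [Function.mem_support, not_not, hψ]
    exact Real.smoothTransition.zero_of_nonpos (by nlinarith [sq_abs x])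
  have h1 : ∫ x, chiK n (m + 1) x = ∫ x, η x * lap G x := by
    congr 1
    ext x
    have e : chiK n (m + 1) x = lap G x := by rw [chiK, iterLap_succ]
    rw [e]
    by_cases hx : ‖x‖ ≤ 1 / 2
    · have : η x = 1 := Real.smoothTransition.one_of_one_le (by nlinarith [norm_nonneg x])
      rw [this, one_mul]
    · have : chiK n (m + 1) x = 0 := by
        by_contra h
        have := tsupport_chiK hk (subset_tsupport _ h)
        simp at this
        apply hx; linarith
      rw [← e, this, mul_zero]
  rw [h1, integral_mul_lap_eq_neg (by exact_mod_cast contDiff_infty.1 hηs 2) hηc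
    (by exact_mod_cast contDiff_infty.1 hGs 2)]
  have hψd : ∀ t : ℝ, deriv ψ t = -(2 * t * deriv smoothTransition (5 - t ^ 2)) := by
    intro t
    have hd : HasDerivAt smoothTransition (deriv smoothTransition (5 - t ^ 2)) (5 - t ^ 2) :=
      ((Real.smoothTransition.contDiff (n := 1)).differentiable (by norm_num) _).hasDerivAt
    have h2 : HasDerivAt (fun t : ℝ => 5 - t ^ 2) (-(2 * t)) t := by
      simpa using (hasDerivAt_pow 2 t).const_sub 5
    have := (hd.comp t h2).deriv
    rw [show ψ = smoothTransition ∘ fun t : ℝ => 5 - t ^ 2 from rfl, this]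
    ring
  have hηd : ∀ (x v : Eu n), dirD v η x
      = -(2 * inner ℝ x v * deriv smoothTransition (5 - ‖x‖ ^ 2)) := by
    intro x v
    have hd : HasDerivAt smoothTransition (deriv smoothTransition (5 - ‖x‖ ^ 2)) (5 - ‖x‖ ^ 2) :=
      ((Real.smoothTransition.contDiff (n := 1)).differentiable (by norm_num) _).hasDerivAt
    have h2 := (hasStrictFDerivAt_norm_sq x).hasFDerivAt.const_sub 5
    have := (hd.comp_hasFDerivAt x h2).fderiv
    rw [dirD, show η = smoothTransition ∘ fun x : Eu n => 5 - ‖x‖ ^ 2 from rfl, this]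
    simp
    ring
  have hder0 : ∀ t : ℝ, 0 ≤ t → t < 2 → deriv smoothTransition (5 - t ^ 2) = 0 := by
    intro t ht ht2
    have : smoothTransition =ᶠ[𝓝 (5 - t ^ 2)] fun _ => 1 := by
      have : ∀ᶠ s in 𝓝 (5 - t ^ 2), 1 < s := lt_mem_nhds (by nlinarith)
      filter_upwards [this] with s hs using Real.smoothTransition.one_of_one_le hs.le
    rw [this.deriv_eq]
    simp
  have h2 : ∀ x : Eu n, ∑ i, dirD (ei i) η x * dirD (ei i) G x
      = (fun r : ℝ => c * (2 - n) * (r ^ (1 - (n : ℝ)) * deriv ψ r)) ‖x‖ := by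
    intro x
    simp only [hηd, hψd]
    by_cases hx : ‖x‖ < 2
    · simp [hder0 _ (norm_nonneg x) hx]
    have hx0 : x ≠ 0 := norm_pos_iff.1 (by linarith)
    have hpos : 0 < ‖x‖ := norm_pos_iff.2 hx0
    have hGd : ∀ i : Fin n, dirD (ei i) G x = c * ((2 - n) * (‖x‖ ^ (-(n : ℝ)) * x i)) := by
      intro i
      have hdd : DifferentiableAt ℝ (fun y : Eu n => ‖y‖ ^ (2 - (n : ℝ))) x :=
        (contDiffAt_norm_rpow (m := 1) _ hx0).differentiableAt (by norm_num)
      rw [dirD, (hGe x (by linarith)).fderiv_eq, fderiv_const_mul hdd]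
      simp only [smul_apply, smul_eq_mul]
      rw [fderiv_norm_rpow_apply _ hx0, inner_ei]
      congr 4; ring
    simp only [hGd, inner_ei]
    have hs : ∑ i, x i ^ 2 = ‖x‖ ^ 2 := by
      rw [EuclideanSpace.norm_sq_eq]; simp
    have e : ∀ i : Fin n, -(2 * x i * deriv smoothTransition (5 - ‖x‖ ^ 2))
        * (c * ((2 - n) * (‖x‖ ^ (-(n : ℝ)) * x i)))
        = -(2 * deriv smoothTransition (5 - ‖x‖ ^ 2) * c * (2 - n) * ‖x‖ ^ (-(n : ℝ))) * x i ^ 2 :=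
      fun i => by ring
    rw [Finset.sum_congr rfl fun i _ => e i, ← Finset.mul_sum, hs]
    have e2 : ‖x‖ ^ (1 - (n : ℝ)) = ‖x‖ ^ (-(n : ℝ)) * ‖x‖ := by
      rw [← Real.rpow_add_one hpos.ne']; congr 1; ring
    rw [e2]; ring
  simp only [h2]
  have hn0 : 0 < n := by omega
  have : Nonempty (Fin n) := ⟨⟨0, hn0⟩⟩
  rw [integral_fun_norm_addHaar (volume : Measure (Eu n))
    (fun r : ℝ => c * (2 - n) * (r ^ (1 - (n : ℝ)) * deriv ψ r))]
  have h3 : ∫ y in Set.Ioi (0 : ℝ), y ^ (Module.finrank ℝ (Eu n) - 1) •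
      (c * (2 - n) * (y ^ (1 - (n : ℝ)) * deriv ψ y)) = c * (n - 2) := by
    have e : ∀ y ∈ Set.Ioi (0 : ℝ), y ^ (Module.finrank ℝ (Eu n) - 1) •
        (c * (2 - n) * (y ^ (1 - (n : ℝ)) * deriv ψ y)) = c * (2 - n) * deriv ψ y := by
      intro y hy
      have hy : 0 < y := hy
      have : y ^ (Module.finrank ℝ (Eu n) - 1) * y ^ (1 - (n : ℝ)) = 1 := by
        rw [← Real.rpow_natCast, ← Real.rpow_add hy]
        simp only [finrank_euclideanSpace, Fintype.card_fin]
        rw [Nat.cast_sub hn0]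
        simp
      rw [smul_eq_mul]
      linear_combination (c * (2 - n) * deriv ψ y) * this
    rw [setIntegral_congr_fun measurableSet_Ioi e, integral_const_mul,
      hψc.integral_Ioi_deriv_eq (by exact_mod_cast contDiff_infty.1 hψs 1)]
    have : ψ 0 = 1 := Real.smoothTransition.one_of_one_le (by norm_num)
    rw [this]; ring
  rw [h3]
  have hv : (volume : Measure (Eu n)).real (ball 0 1) ≠ 0 :=
    (ENNReal.toReal_pos (measure_ball_pos _ _ one_pos).ne' measure_ball_lt_top.ne).ne'
  have hn2 : (n : ℝ) - 2 ≠ 0 := by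
    have : (0 : ℝ) ≤ m := by positivity
    apply ne_of_gt; linarith
  simp only [finrank_euclideanSpace, Fintype.card_fin]
  simp only [smul_eq_mul, nsmul_eq_mul, neg_ne_zero]
  exact mul_ne_zero (by exact_mod_cast hn0.ne') (mul_ne_zero hv (mul_ne_zero hc0 hn2))

end Kernel

/-! ### Interior estimates -/

section Interior

set_option maxSynthPendingDepth 3

open scoped ContDiff

variable {n : ℕ}

/-- A compactly supported function bounded by `M` pairs with `w` with bound `M * ∫ |w|`. -/
lemma abs_integral_mul_le {f w : Eu n → ℝ} {M B : ℝ} (hf : ∀ x, |f x| ≤ M)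
    (hs : ∀ x, x ∉ closedBall (0 : Eu n) 1 → f x = 0) (hw : Continuous w)
    (hB : ∫ x in closedBall (0 : Eu n) 1, |w x| ≤ B) : |∫ x, f x * w x| ≤ M * B := by
  have hM : 0 ≤ M := (abs_nonneg _).trans (hf 0)
  rw [← setIntegral_eq_integral_of_forall_compl_eq_zero (s := closedBall (0 : Eu n) 1)
    (fun x hx => by rw [hs x hx, zero_mul])]
  have hi : IntegrableOn (fun x => M * |w x|) (closedBall (0 : Eu n) 1) :=
    (continuous_const.mul hw.abs).continuousOn.integrableOn_compact (isCompact_closedBall 0 1)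
  calc |∫ x in closedBall (0 : Eu n) 1, f x * w x|
      ≤ ∫ x in closedBall (0 : Eu n) 1, M * |w x| := by
        refine norm_integral_le_of_norm_le (f := fun x => f x * w x) hi (Eventually.of_forall fun x => ?_)
        rw [Real.norm_eq_abs, abs_mul]
        exact mul_le_mul_of_nonneg_right (hf x) (abs_nonneg _)
    _ = M * ∫ x in closedBall (0 : Eu n) 1, |w x| := integral_const_mul _ _
    _ ≤ M * B := mul_le_mul_of_nonneg_left hB hM

/-- Interior estimate for the derivatives of order `l < 2k` at the centre of the unit ball. The
averages of `D^l w` against the rescaled mollifier `χ` differ, between consecutive dyadic scales,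
by an integral of `Δ^k w` against a smooth kernel, and these differences are summable. -/
lemma interior_unit_aux {k : ℕ} (hk : 1 ≤ k) (hn : 2 * k < n) {l : ℕ} (hl : l < 2 * k) :
    ∃ C : ℝ, 0 < C ∧ ∀ w : Eu n → ℝ, ContDiff ℝ (2 * k : ℕ) w → ∀ A B : ℝ,
      (∀ x ∈ closedBall (0 : Eu n) 1, |iterLap k w x| ≤ A) →
      (∫ x in closedBall (0 : Eu n) 1, |w x|) ≤ B →
      ‖iteratedFDeriv ℝ l w 0‖ ≤ C * (A + B) := by
  have hχ := contDiff_chiK n k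
  have hd := contDiff_diffK n k
  have hχt : ∀ x, x ∉ closedBall (0 : Eu n) 1 → x ∉ tsupport (chiK n k) := fun x hx h =>
    hx (closedBall_subset_closedBall (by norm_num) (tsupport_chiK hk h))
  have hχc : HasCompactSupport (chiK n k) :=
    (isCompact_closedBall (0 : Eu n) (1 / 2)).of_isClosed_subset (isClosed_tsupport _)
      (tsupport_chiK hk)
  have hdc : HasCompactSupport (diffK n k) :=
    (isCompact_closedBall (0 : Eu n) 1).of_isClosed_subset (isClosed_tsupport _)
      (hasCompactSupport_diffK n k)
  have hbd : ∀ f : Eu n → ℝ, ContDiff ℝ ∞ f → HasCompactSupport f →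
      ∃ M, 0 ≤ M ∧ ∀ x, ‖iteratedFDeriv ℝ l f x‖ ≤ M := by
    intro f hf hfc
    obtain ⟨M, hM⟩ := (hfc.iteratedFDeriv (𝕜 := ℝ) l).exists_bound_of_continuous
      (hf.continuous_iteratedFDeriv (m := l) (by exact_mod_cast le_top))
    exact ⟨M, (norm_nonneg _).trans (hM 0), hM⟩
  obtain ⟨M1, hM1, hM1'⟩ := hbd _ hχ hχc
  obtain ⟨M2, hM2, hM2'⟩ := hbd _ hd hdc
  set I := ∫ x, chiK n k x with hI
  have hI0 : 0 < |I| := abs_pos.2 (integral_chiK_ne_zero hk hn)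
  set β := volume.real (closedBall (0 : Eu n) 1) with hβ
  have hβ0 : 0 ≤ β := ENNReal.toReal_nonneg
  refine ⟨(M1 + M2 * β + 1) / |I|, by positivity, ?_⟩
  intro w hw A B hA hB
  have hA0 : 0 ≤ A := (abs_nonneg _).trans (hA 0 (by simp))
  have hB0 : 0 ≤ B := (integral_nonneg fun _ => abs_nonneg _).trans hB
  have hwl : ContDiff ℝ (l : ℕ) w := hw.of_le (by exact_mod_cast hl.le)
  refine ContinuousMultilinearMap.opNorm_le_bound (by positivity) fun v => ?_
  set P := ∏ i, ‖v i‖ with hP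
  have hP0 : 0 ≤ P := Finset.prod_nonneg fun _ _ => norm_nonneg _
  set g : Eu n → ℝ := fun y => iteratedFDeriv ℝ l w y v with hg
  have hgc : Continuous g :=
    (ContinuousMultilinearMap.apply ℝ (fun _ : Fin l => Eu n) ℝ v).continuous.comp
      (hwl.continuous_iteratedFDeriv (m := l) le_rfl)
  -- `J s` is the average of `D^l w` at scale `s`: `J 0` recovers the derivative at the origin, and at
  -- scale `1` all derivatives can be moved onto `χ`.
  set J : ℝ → ℝ := fun s => ∫ y, chiK n k y * g (s • y) with hJ
  have hJset : ∀ s, J s = ∫ y in closedBall (0 : Eu n) 1, chiK n k y * g (s • y) := fun s =>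
    (setIntegral_eq_integral_of_forall_compl_eq_zero fun x hx => by
      rw [image_eq_zero_of_notMem_tsupport (hχt x hx), zero_mul]).symm
  have hJc : Continuous J := by
    have : J = fun s => ∫ y in closedBall (0 : Eu n) 1, chiK n k y * g (s • y) := funext hJset
    rw [this]
    refine continuous_parametric_integral_of_continuous ?_ (isCompact_closedBall 0 1)
    exact (hχ.continuous.comp continuous_snd).mul
      (hgc.comp (continuous_fst.smul continuous_snd))
  have hJ0 : J 0 = I * g 0 := by
    simp only [hJ, zero_smul]
    rw [integral_mul_const]
  have hJ1 : |J 1| ≤ P * M1 * B := by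
    simp only [hJ, one_smul, hg]
    rw [integral_mul_iteratedFDeriv l v hχ hχc hwl]
    refine abs_integral_mul_le (fun x => ?_) (fun x hx => ?_) hw.continuous hB
    · exact (abs_kerD_le l v hχ x).trans (mul_le_mul_of_nonneg_left (hM1' x) hP0)
    · exact image_eq_zero_of_notMem_tsupport fun h => hχt x hx (tsupport_kerD l v _ h)
  -- With `f = w (s ·)`, integrating `D^l` and `Δ^k` by parts against `diffK` gives
  -- `s ^ l * (J s - J (2 * s)) = ∫ D^l (diffK) * Δ^k f`, and `Δ^k f` carries a factor `s ^ (2k)`,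
  -- which beats `s ^ l` as `l < 2k`.
  have hstep : ∀ s : ℝ, 0 < s → s ≤ 1 → |J s - J (2 * s)| ≤ s * (P * M2 * (β * A)) := by
    intro s hs hs1
    set f : Eu n → ℝ := fun y => 1 * w (0 + s • y) with hf
    have hfs : ContDiff ℝ (2 * k : ℕ) f := contDiff_const.mul (hw.comp (by fun_prop))
    have hf' : f = fun y => w (0 + s • y) := by ext; simp [hf]
    have e1 : ∫ x, kerD l v (diffK n k) x * iterLap k f x
        = ∫ x, iterLap k (diffK n k) x * iteratedFDeriv ℝ l f x v := by
      rw [integral_mul_iteratedFDeriv l v (contDiff_iterLap_infty k hd)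
        (hasCompactSupport_iterLap k hdc) (hfs.of_le (by exact_mod_cast hl.le)),
        kerD_iterLap l k v hd, integral_mul_iterLap k (contDiff_kerD l v hd)
        (hasCompactSupport_kerD l v hdc) hfs]
    have e2 : ∫ x, iterLap k (diffK n k) x * iteratedFDeriv ℝ l f x v
        = s ^ l * (J s - J (2 * s)) := by
      have i1 : Integrable fun y => chiK n k y * g (s • y) :=
        (hχ.continuous.mul (hgc.comp (continuous_const_smul s))).integrable_of_hasCompactSupport
          hχc.mul_right
      have i2 : Integrable fun y => chiK n k y * g ((2 * s) • y) :=
        (hχ.continuous.mul (hgc.comp (continuous_const_smul _))).integrable_of_hasCompactSupport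
          hχc.mul_right
      have i3 : Integrable fun y : Eu n =>
          (fun y => chiK n k y * g ((2 * s) • y)) ((2⁻¹ : ℝ) • y) :=
        i2.comp_smul (by norm_num)
      have e3 := Measure.integral_comp_smul (volume : Measure (Eu n))
        (fun y => chiK n k y * g ((2 * s) • y)) (2⁻¹ : ℝ)
      have e4 : ∀ x, iterLap k (diffK n k) x * iteratedFDeriv ℝ l f x v
          = s ^ l * (chiK n k x * g (s • x)) - s ^ l * (2⁻¹ ^ n *
            (fun y => chiK n k y * g ((2 * s) • y)) ((2⁻¹ : ℝ) • x)) := by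
        intro x
        rw [iterLap_diffK, hf', iteratedFDeriv_comp_affine hwl]
        have : (2 * s) • (2⁻¹ : ℝ) • x = s • x := by
          rw [smul_smul]; congr 1; ring
        simp only [this, zero_add, smul_apply, smul_eq_mul, hg]
        ring
      rw [integral_congr_ae (Eventually.of_forall e4),
        integral_sub (i1.const_mul _) ((i3.const_mul _).const_mul _), integral_const_mul,
        integral_const_mul, integral_const_mul, e3]
      have : (2⁻¹ : ℝ) ^ n * |((2⁻¹ : ℝ) ^ Module.finrank ℝ (Eu n))⁻¹| = 1 := by
        rw [abs_of_pos (by positivity)]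
        simp
      simp only [smul_eq_mul]
      rw [← mul_assoc (2⁻¹ ^ n), this, one_mul, mul_sub]
    have e5 : |∫ x, kerD l v (diffK n k) x * iterLap k f x|
        ≤ P * M2 * (s ^ (2 * k) * (β * A)) := by
      refine abs_integral_mul_le (fun x => ?_) (fun x hx => ?_) ?_ ?_
      · exact (abs_kerD_le l v hd x).trans (mul_le_mul_of_nonneg_left (hM2' x) hP0)
      · exact image_eq_zero_of_notMem_tsupport fun h =>
          hx (hasCompactSupport_diffK n k (tsupport_kerD l v _ h))
      · exact (contDiff_iterLap (m := 0) k hfs (by simp)).continuous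
      · rw [hf, iterLap_const_mul_comp_affine k hw]
        calc ∫ x in closedBall (0 : Eu n) 1, |1 * s ^ (2 * k) * iterLap k w (0 + s • x)|
            ≤ ∫ x in closedBall (0 : Eu n) 1, s ^ (2 * k) * A := by
              refine setIntegral_mono_on ?_ ?_ measurableSet_closedBall ?_
              · exact (((contDiff_iterLap (m := 0) k hw (by simp)).continuous.comp
                  (by fun_prop)).const_mul _).abs.continuousOn.integrableOn_compact
                  (isCompact_closedBall 0 1)
              · exact continuousOn_const.integrableOn_compact (isCompact_closedBall 0 1)
              · intro x hx
                rw [one_mul, abs_mul, abs_of_nonneg (by positivity)]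
                refine mul_le_mul_of_nonneg_left (hA _ ?_) (by positivity)
                simp only [mem_closedBall, dist_zero_right, zero_add, norm_smul,
                  Real.norm_eq_abs, abs_of_pos hs] at hx ⊢
                nlinarith [norm_nonneg x]
          _ = s ^ (2 * k) * (β * A) := by
              rw [setIntegral_const, smul_eq_mul]; ring
    rw [e1, e2, abs_mul, abs_of_pos (by positivity)] at e5
    have e6 : s ^ (2 * k) ≤ s ^ l * s := by
      rw [← pow_succ]
      exact pow_le_pow_of_le_one hs.le hs1 (by omega)
    have hsl : 0 < s ^ l := by positivity
    refine le_of_mul_le_mul_left ?_ hsl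
    calc _ ≤ _ := e5
      _ ≤ P * M2 * (s ^ l * s * (β * A)) := by gcongr
      _ = _ := by ring
  have hind : ∀ m : ℕ, |J ((1 / 2) ^ m)| ≤ P * M1 * B + (1 - (1 / 2) ^ m) * (P * M2 * (β * A)) := by
    intro m
    induction m with
    | zero => simpa using hJ1
    | succ m ih =>
      have h1 := hstep ((1 / 2) ^ (m + 1)) (by positivity) (pow_le_one₀ (by norm_num) (by norm_num))
      have h2 : (2 : ℝ) * (1 / 2) ^ (m + 1) = (1 / 2) ^ m := by rw [pow_succ]; ring
      rw [h2] at h1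
      have h3 := abs_add_le (J ((1 / 2) ^ (m + 1)) - J ((1 / 2) ^ m)) (J ((1 / 2) ^ m))
      rw [sub_add_cancel] at h3
      have h4 : ((1 : ℝ) / 2) ^ m = 2 * (1 / 2) ^ (m + 1) := h2.symm
      rw [h4] at h1 h3 ih
      linarith
  have hlim : Tendsto (fun m : ℕ => |J ((1 / 2) ^ m)|) atTop (𝓝 |J 0|) :=
    ((hJc.tendsto 0).comp
      (tendsto_pow_atTop_nhds_zero_of_lt_one (by norm_num) (by norm_num))).abs
  have hfin : |J 0| ≤ P * M1 * B + P * M2 * (β * A) := by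
    refine le_of_tendsto hlim (Eventually.of_forall fun m => (hind m).trans ?_)
    have : (0 : ℝ) ≤ (1 / 2) ^ m := by positivity
    have h2 : 0 ≤ P * M2 * (β * A) := by positivity
    nlinarith
  rw [hJ0, abs_mul] at hfin
  have : |g 0| ≤ (P * M1 * B + P * M2 * (β * A)) / |I| := by
    rw [le_div_iff₀ hI0]; linarith
  rw [Real.norm_eq_abs]
  refine this.trans ?_
  rw [div_mul_eq_mul_div, div_mul_eq_mul_div]
  refine div_le_div_of_nonneg_right ?_ hI0.le
  have t1 : 0 ≤ P * M1 * A := by positivity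
  have t2 : 0 ≤ P * M2 * β * B := by positivity
  have t3 : 0 ≤ P * A := by positivity
  have t4 : 0 ≤ P * B := by positivity
  nlinarith

lemma interior_unit {k : ℕ} (hk : 1 ≤ k) (hn : 2 * k < n) :
    ∃ C : ℝ, 0 < C ∧ ∀ w : Eu n → ℝ, ContDiff ℝ (2 * k : ℕ) w → ∀ A B : ℝ,
      (∀ x ∈ closedBall (0 : Eu n) 1, |iterLap k w x| ≤ A) →
      (∫ x in closedBall (0 : Eu n) 1, |w x|) ≤ B → ∀ l < 2 * k,
      ‖iteratedFDeriv ℝ l w 0‖ ≤ C * (A + B) := by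
  have h : ∀ l : Fin (2 * k), _ := fun l => interior_unit_aux hk hn l.2
  choose C hC hC' using h
  refine ⟨1 + ∑ l, C l, by
    have := Finset.sum_nonneg fun l (_ : l ∈ Finset.univ) => (hC l).le
    linarith, ?_⟩
  intro w hw A B hA hB l hl
  have hA0 : 0 ≤ A := (abs_nonneg _).trans (hA 0 (by simp))
  have hB0 : 0 ≤ B := (integral_nonneg fun _ => abs_nonneg _).trans hB
  refine (hC' ⟨l, hl⟩ w hw A B hA hB).trans (mul_le_mul_of_nonneg_right ?_ (by positivity))
  have := Finset.single_le_sum (fun l _ => (hC l).le) (Finset.mem_univ (⟨l, hl⟩ : Fin (2 * k)))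
  linarith

lemma preimage_affine_closedBall (x : Eu n) {s : ℝ} (hs : 0 < s) :
    (fun y : Eu n => x + s • y) ⁻¹' closedBall x s = closedBall 0 1 := by
  ext y
  simp only [Set.mem_preimage, mem_closedBall, dist_eq_norm, add_sub_cancel_left, norm_smul,
    Real.norm_eq_abs, abs_of_pos hs, sub_zero]
  constructor <;> intro hy
  · exact le_of_mul_le_mul_left (by linarith) hs
  · nlinarith

lemma setIntegral_closedBall_affine (g : Eu n → ℝ) (x : Eu n) {s : ℝ} (hs : 0 < s) :
    ∫ y in closedBall (0 : Eu n) 1, g (x + s • y) = (s ^ n)⁻¹ * ∫ y in closedBall x s, g y := by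
  have e1 : ∀ y : Eu n, (closedBall (0 : Eu n) 1).indicator (fun y => g (x + s • y)) y
      = (fun z => (closedBall x s).indicator g (x + z)) (s • y) := by
    intro y
    rw [← preimage_affine_closedBall x hs]
    by_cases hy : x + s • y ∈ closedBall x s
    · simp only [Set.indicator, Set.mem_preimage, hy, if_true]
    · simp only [Set.indicator, Set.mem_preimage, hy, if_false]
  rw [← integral_indicator measurableSet_closedBall, integral_congr_ae (Eventually.of_forall e1),
    Measure.integral_comp_smul (volume : Measure (Eu n))
      (fun z => (closedBall x s).indicator g (x + z)) s,
    integral_add_left_eq_self (fun z => (closedBall x s).indicator g z) x,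
    integral_indicator measurableSet_closedBall, smul_eq_mul, abs_of_pos (by positivity)]
  simp only [finrank_euclideanSpace, Fintype.card_fin]

/-- The estimate of `interior_unit` on the ball of radius `s` about `x`. -/
lemma interior_scaled {k : ℕ} (hk : 1 ≤ k) (hn : 2 * k < n) :
    ∃ C : ℝ, 0 < C ∧ ∀ w : Eu n → ℝ, ContDiff ℝ (2 * k : ℕ) w → ∀ (x : Eu n) (s : ℝ), 0 < s →
      ∀ A B : ℝ, (∀ y ∈ closedBall x s, |iterLap k w y| ≤ A) →
      (∫ y in closedBall x s, |w y|) ≤ B → ∀ l < 2 * k,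
      s ^ l * ‖iteratedFDeriv ℝ l w x‖ ≤ C * (s ^ (2 * k) * A + (s ^ n)⁻¹ * B) := by
  obtain ⟨C, hC, h⟩ := interior_unit hk hn
  refine ⟨C, hC, fun w hw x s hs A B hA hB l hl => ?_⟩
  have hfs : ContDiff ℝ (2 * k : ℕ) (fun y => 1 * w (x + s • y)) :=
    contDiff_const.mul (hw.comp (by fun_prop))
  have key := h _ hfs (s ^ (2 * k) * A) ((s ^ n)⁻¹ * B) ?_ ?_ l hl
  · have e : (fun y => 1 * w (x + s • y)) = fun y => w (x + s • y) := by ext; simp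
    rw [e, iteratedFDeriv_comp_affine (hw.of_le (by exact_mod_cast hl.le)), norm_smul,
      smul_zero, add_zero, norm_pow, Real.norm_eq_abs, abs_of_pos hs] at key
    exact key
  · intro y hy
    rw [iterLap_const_mul_comp_affine k hw, one_mul, abs_mul, abs_of_nonneg (by positivity)]
    refine mul_le_mul_of_nonneg_left (hA _ ?_) (by positivity)
    rw [← preimage_affine_closedBall x hs] at hy
    exact hy
  · simp only [one_mul]
    rw [setIntegral_closedBall_affine (fun y => |w y|) x hs]
    exact mul_le_mul_of_nonneg_left hB (by positivity)

end Interior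

/-! ### Absorbing the zeroth order term -/

section Absorption

set_option maxSynthPendingDepth 3

open scoped ContDiff

variable {n : ℕ}

/-- If `|Δ^k w| ≤ Λ |w|`, the zeroth order term is absorbed at a maximum of `(1 - |x|)^n |w x|`. -/
lemma absorb_unit {k : ℕ} (hk : 1 ≤ k) (hn : 2 * k < n) {Λ : ℝ} (hΛ : 0 ≤ Λ) :
    ∃ C : ℝ, 0 < C ∧ ∀ w : Eu n → ℝ, ContDiff ℝ (2 * k : ℕ) w →
      (∀ x ∈ closedBall (0 : Eu n) 1, |iterLap k w x| ≤ Λ * |w x|) → ∀ l < 2 * k,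
      ‖iteratedFDeriv ℝ l w 0‖ ≤ C * ∫ x in closedBall (0 : Eu n) 1, |w x| := by
  obtain ⟨C, hC, h⟩ := interior_scaled hk hn
  set θ : ℝ := 1 / (2 * (1 + C * Λ * 2 ^ n)) with hθ
  have hK0 : 0 ≤ C * Λ * 2 ^ n := by positivity
  have hθ0 : 0 < θ := by positivity
  have hθ1 : θ ≤ 1 / 2 := by
    rw [hθ]; apply one_div_le_one_div_of_le <;> linarith
  have hθ2 : C * Λ * 2 ^ n * θ ≤ 1 / 2 := by
    rw [hθ, mul_one_div, div_le_iff₀ (by positivity)]; linarith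
  refine ⟨2 ^ (2 * k) * (C * (Λ * (2 * C * (θ ^ n)⁻¹ * 2 ^ n) + 2 ^ n)), by positivity, ?_⟩
  intro w hw hwl l hl
  set B := ∫ x in closedBall (0 : Eu n) 1, |w x| with hB
  have hB0 : 0 ≤ B := integral_nonneg fun _ => abs_nonneg _
  have hint : IntegrableOn (fun x => |w x|) (closedBall (0 : Eu n) 1) :=
    hw.continuous.abs.continuousOn.integrableOn_compact (isCompact_closedBall 0 1)
  have hmono : ∀ (x : Eu n) (s : ℝ), closedBall x s ⊆ closedBall 0 1 →
      ∫ y in closedBall x s, |w y| ≤ B := fun x s hs =>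
    setIntegral_mono_set hint (Eventually.of_forall fun _ => abs_nonneg _) hs.eventuallyLE
  set Ψ : Eu n → ℝ := fun x => (1 - ‖x‖) ^ n * |w x| with hΨ
  have hΨc : Continuous Ψ :=
    ((continuous_const.sub continuous_norm).pow n).mul hw.continuous.abs
  obtain ⟨z, hz, hzmax⟩ := (isCompact_closedBall (0 : Eu n) 1).exists_isMaxOn
    ⟨0, by simp⟩ hΨc.continuousOn
  have hzmax' : ∀ y ∈ closedBall (0 : Eu n) 1, Ψ y ≤ Ψ z := fun y hy => hzmax hy
  -- The interior estimate on the ball of radius `θ d` about the maximum point `z`, with `d` the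
  -- distance of `z` to the unit sphere: the zeroth order term contributes at most half of `Ψ z`.
  have hM : Ψ z ≤ 2 * C * (θ ^ n)⁻¹ * B := by
    have hz1 : ‖z‖ ≤ 1 := by simpa using hz
    rcases hz1.eq_or_lt with h1 | h1
    · have : Ψ z = 0 := by simp [hΨ, h1, show n ≠ 0 by omega]
      rw [this]; positivity
    set d := 1 - ‖z‖ with hd
    have hd0 : 0 < d := by linarith
    have hd1 : d ≤ 1 := by linarith [norm_nonneg z]
    have hnorm : ∀ y ∈ closedBall z (θ * d), d / 2 ≤ 1 - ‖y‖ := by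
      intro y hy
      rw [mem_closedBall, dist_eq_norm] at hy
      have := norm_le_norm_add_norm_sub z y
      have t : ‖y - z‖ ≤ d / 2 := hy.trans (by nlinarith)
      rw [norm_sub_rev] at this
      rw [norm_sub_rev] at t
      rw [norm_sub_rev] at this
      linarith [norm_sub_norm_le y z, norm_sub_rev y z]
    have hsub : closedBall z (θ * d) ⊆ closedBall 0 1 := fun y hy => by
      have := hnorm y hy
      simp only [mem_closedBall, dist_zero_right]
      linarith
    have hwy : ∀ y ∈ closedBall z (θ * d), |w y| ≤ Ψ z * 2 ^ n / d ^ n := by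
      intro y hy
      have h2 := hzmax' y (hsub hy)
      have h3 : (d / 2) ^ n * |w y| ≤ Ψ y :=
        mul_le_mul_of_nonneg_right (pow_le_pow_left₀ (by positivity) (hnorm y hy) n)
          (abs_nonneg _)
      rw [le_div_iff₀ (by positivity)]
      have h4 : (d / 2) ^ n * |w y| ≤ Ψ z := h3.trans h2
      rw [div_pow, div_mul_eq_mul_div, div_le_iff₀ (by positivity)] at h4
      linarith
    have key := h w hw z (θ * d) (by positivity) (Λ * (Ψ z * 2 ^ n / d ^ n)) B
      (fun y hy => (hwl y (hsub hy)).trans (mul_le_mul_of_nonneg_left (hwy y hy) hΛ))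
      (hmono _ _ hsub) 0 (by omega)
    rw [pow_zero, one_mul, norm_iteratedFDeriv_zero, Real.norm_eq_abs] at key
    have hΨ0 : 0 ≤ Ψ z := by positivity
    have e1 : Ψ z ≤ d ^ n * (C * ((θ * d) ^ (2 * k) * (Λ * (Ψ z * 2 ^ n / d ^ n))
        + ((θ * d) ^ n)⁻¹ * B)) := mul_le_mul_of_nonneg_left key (by positivity)
    have e2 : d ^ n * (C * ((θ * d) ^ (2 * k) * (Λ * (Ψ z * 2 ^ n / d ^ n))
        + ((θ * d) ^ n)⁻¹ * B))
        = C * Λ * 2 ^ n * (θ * d) ^ (2 * k) * Ψ z + C * (θ ^ n)⁻¹ * B := by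
      rw [mul_pow θ d n]
      field_simp
    have e3 : (θ * d) ^ (2 * k) ≤ θ := by
      calc (θ * d) ^ (2 * k) ≤ (θ * d) ^ 1 :=
            pow_le_pow_of_le_one (by positivity) (by nlinarith) (by omega)
        _ ≤ θ := by nlinarith
    have e4 : C * Λ * 2 ^ n * (θ * d) ^ (2 * k) * Ψ z ≤ 1 / 2 * Ψ z :=
      mul_le_mul_of_nonneg_right ((mul_le_mul_of_nonneg_left e3 hK0).trans hθ2) hΨ0
    linarith
  have hsub : closedBall (0 : Eu n) (1 / 2) ⊆ closedBall 0 1 :=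
    closedBall_subset_closedBall (by norm_num)
  have hwy : ∀ y ∈ closedBall (0 : Eu n) (1 / 2), |w y| ≤ 2 * C * (θ ^ n)⁻¹ * B * 2 ^ n := by
    intro y hy
    have h2 := (hzmax' y (hsub hy)).trans hM
    simp only [mem_closedBall, dist_zero_right] at hy
    have h3 : (1 / 2) ^ n * |w y| ≤ Ψ y :=
      mul_le_mul_of_nonneg_right (pow_le_pow_left₀ (by positivity) (by linarith) n)
        (abs_nonneg _)
    have h4 := h3.trans h2
    rw [div_pow, div_mul_eq_mul_div, div_le_iff₀ (by positivity)] at h4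
    simpa using h4
  have key := h w hw 0 (1 / 2) (by positivity) (Λ * (2 * C * (θ ^ n)⁻¹ * B * 2 ^ n)) B
      (fun y hy => (hwl y (hsub hy)).trans (mul_le_mul_of_nonneg_left (hwy y hy) hΛ))
      (hmono _ _ hsub) l hl
  have f1 : ((1 : ℝ) / 2) ^ (2 * k) ≤ (1 / 2) ^ l :=
    pow_le_pow_of_le_one (by norm_num) (by norm_num) hl.le
  have f2 : ((1 : ℝ) / 2) ^ (2 * k) ≤ 1 := pow_le_one₀ (by norm_num) (by norm_num)
  have f3 : ((1 : ℝ) / 2) ^ (2 * k) * ‖iteratedFDeriv ℝ l w 0‖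
      ≤ C * (Λ * (2 * C * (θ ^ n)⁻¹ * B * 2 ^ n) + 2 ^ n * B) := by
    refine (mul_le_mul_of_nonneg_right f1 (norm_nonneg _)).trans (key.trans ?_)
    refine mul_le_mul_of_nonneg_left (add_le_add ?_ (le_of_eq ?_)) hC.le
    · exact mul_le_of_le_one_left (by positivity) f2
    · rw [one_div, inv_pow, inv_inv]
  rw [one_div, inv_pow, inv_mul_le_iff₀ (by positivity)] at f3
  refine f3.trans (le_of_eq ?_)
  ring

/-- The estimate of `absorb_unit` at scale `s`, for a function defined only on a ball of radius `3s`: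
it is cut off between the balls of radii `3s/2` and `2s`. -/
lemma absorb_scaled {k : ℕ} (hk : 1 ≤ k) (hn : 2 * k < n) {Λ : ℝ} (hΛ : 0 ≤ Λ) :
    ∃ C : ℝ, 0 < C ∧ ∀ (u : Eu n → ℝ) (x : Eu n) (s : ℝ), 0 < s →
      ContDiffOn ℝ (2 * k : ℕ) u (ball x (3 * s)) →
      (∀ y ∈ ball x (3 * s), s ^ (2 * k) * |iterLap k u y| ≤ Λ * |u y|) → ∀ l < 2 * k,
      s ^ l * ‖iteratedFDeriv ℝ l u x‖ ≤ C * ((s ^ n)⁻¹ * ∫ y in closedBall x s, |u y|) := by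
  obtain ⟨C, hC, h⟩ := absorb_unit hk hn hΛ
  refine ⟨C, hC, fun u x s hs hu hL l hl => ?_⟩
  let f : ContDiffBump x := ⟨3 / 2 * s, 2 * s, by positivity, by linarith⟩
  set w : Eu n → ℝ := fun y => f y * u y with hw
  have hwe : ∀ y ∈ ball x (3 / 2 * s), w =ᶠ[𝓝 y] u := by
    intro y hy
    filter_upwards [f.eventuallyEq_one_of_mem_ball (x := y) hy] with z hz
    simp [hw, hz]
  have hws : ContDiff ℝ (2 * k : ℕ) w := by
    rw [contDiff_iff_contDiffAt]
    intro y
    by_cases hy : y ∈ ball x (3 * s)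
    · exact f.contDiffAt.mul (hu.contDiffAt (isOpen_ball.mem_nhds hy))
    · have hy' : y ∈ (closedBall x (2 * s))ᶜ := by
        simp only [Set.mem_compl_iff, mem_closedBall, not_le, mem_ball, not_lt] at hy ⊢
        linarith
      have : w =ᶠ[𝓝 y] fun _ => 0 := by
        filter_upwards [isClosed_closedBall.isOpen_compl.mem_nhds hy'] with z hz
        have : f z = 0 := f.zero_of_le_dist (by
          simp only [Set.mem_compl_iff, mem_closedBall, not_le] at hz
          exact hz.le)
        simp [hw, this]
      exact contDiffAt_const.congr_of_eventuallyEq this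
  have hcb : closedBall x s ⊆ ball x (3 / 2 * s) := closedBall_subset_ball (by linarith)
  have hfs : ContDiff ℝ (2 * k : ℕ) (fun y => 1 * w (x + s • y)) :=
    contDiff_const.mul (hws.comp (by fun_prop))
  have hwu : ∀ y ∈ closedBall x s, w y = u y := fun y hy => (hwe y (hcb hy)).eq_of_nhds
  have key := h _ hfs ?_ l hl
  · have e : (fun y => 1 * w (x + s • y)) = fun y => w (x + s • y) := by ext; simp
    rw [e, iteratedFDeriv_comp_affine (hws.of_le (by exact_mod_cast hl.le)), norm_smul,
      smul_zero, add_zero, norm_pow, Real.norm_eq_abs, abs_of_pos hs,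
      ((hwe x (mem_ball_self (by positivity))).iteratedFDeriv ℝ l).eq_of_nhds] at key
    simp only [one_mul] at key
    rw [setIntegral_closedBall_affine (fun y => |w y|) x hs,
      setIntegral_congr_fun measurableSet_closedBall fun y hy => by rw [hwu y hy]] at key
    exact key
  · intro y hy
    rw [iterLap_const_mul_comp_affine k hws]
    rw [← preimage_affine_closedBall x hs] at hy
    have hy' : x + s • y ∈ closedBall x s := hy
    simp only [one_mul]
    rw [abs_mul, abs_of_nonneg (by positivity), hwu _ hy',
      (iterLap_congr k (hwe _ (hcb hy'))).eq_of_nhds]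
    exact hL _ (ball_subset_ball (by linarith) (hcb hy'))

end Absorption

/-! ### Decay of mass from finite energy -/

section Hardy

set_option maxSynthPendingDepth 3

open scoped ContDiff ENNReal

variable {n : ℕ}

/-- The annulus `r < ‖x‖ ≤ s`. -/
def ann (n : ℕ) (r s : ℝ) : Set (Eu n) := {x | r < ‖x‖ ∧ ‖x‖ ≤ s}

lemma measurableSet_ann (r s : ℝ) : MeasurableSet (ann n r s) :=
  (measurableSet_lt measurable_const measurable_norm).inter
    (measurableSet_le measurable_norm measurable_const)

lemma lintegral_comp_smul' (f : Eu n → ℝ≥0∞) (hf : Measurable f) {t : ℝ} (ht : 0 < t) :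
    ∫⁻ x, f (t • x) = ENNReal.ofReal (t ^ n)⁻¹ * ∫⁻ x, f x := by
  have := lintegral_map (μ := (volume : Measure (Eu n))) hf (measurable_const_smul t)
  rw [← this]
  change ∫⁻ x, f x ∂(Measure.map (t • ·) volume) = _
  rw [Measure.map_addHaar_smul _ ht.ne', lintegral_smul_measure, abs_of_pos (by positivity)]
  simp

lemma lintegral_ann_smul (f : Eu n → ℝ≥0∞) (hf : Measurable f) (r s : ℝ) {t : ℝ} (ht : 0 < t) :
    ∫⁻ x in ann n r s, f (t • x)
      = ENNReal.ofReal (t ^ n)⁻¹ * ∫⁻ x in ann n (t * r) (t * s), f x := by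
  rw [← lintegral_indicator (measurableSet_ann _ _), ← lintegral_indicator (measurableSet_ann _ _),
    ← lintegral_comp_smul' _ (hf.indicator (measurableSet_ann _ _)) ht]
  refine lintegral_congr fun x => ?_
  have : x ∈ ann n r s ↔ t • x ∈ ann n (t * r) (t * s) := by
    simp only [ann, Set.mem_ofPred_eq, norm_smul, Real.norm_eq_abs, abs_of_pos ht,
      mul_lt_mul_iff_right₀ ht, mul_le_mul_iff_right₀ ht]
  by_cases hx : x ∈ ann n r s
  · rw [Set.indicator_of_mem hx, Set.indicator_of_mem (this.1 hx)]
  · rw [Set.indicator_of_notMem hx, Set.indicator_of_notMem (fun h => hx (this.2 h))]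

/-- Dyadic comparison: a radial increment bound integrates, by Tonelli and scaling, to a bound
for the mass of an annulus by the mass of the next one. -/
lemma dyadic_step {G0 G1 : Eu n → ℝ≥0∞} (h0 : Measurable G0) (h1 : Measurable G1) {r : ℝ}
    (hr : 0 < r) (h : ∀ x ∈ ann n r (2 * r),
      G0 x ≤ G0 ((2 : ℝ) • x) + ENNReal.ofReal ‖x‖ * ∫⁻ t in Set.Ioc (1 : ℝ) 2, G1 (t • x)) :
    ∫⁻ x in ann n r (2 * r), G0 x ≤ ENNReal.ofReal (2 ^ n)⁻¹ * (∫⁻ x in ann n (2 * r) (4 * r), G0 x)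
      + ENNReal.ofReal (2 * r) * ∫⁻ x in ann n r (4 * r), G1 x := by
  have hm : Measurable fun p : Eu n × ℝ => G1 (p.2 • p.1) :=
    h1.comp (measurable_snd.smul measurable_fst)
  calc ∫⁻ x in ann n r (2 * r), G0 x
      ≤ ∫⁻ x in ann n r (2 * r), (G0 ((2 : ℝ) • x)
        + ENNReal.ofReal (2 * r) * ∫⁻ t in Set.Ioc (1 : ℝ) 2, G1 (t • x)) := by
        refine setLIntegral_mono' (measurableSet_ann _ _) fun x hx => (h x hx).trans ?_
        gcongr
        exact hx.2
    _ = (∫⁻ x in ann n r (2 * r), G0 ((2 : ℝ) • x)) + ENNReal.ofReal (2 * r) *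
        ∫⁻ x in ann n r (2 * r), ∫⁻ t in Set.Ioc (1 : ℝ) 2, G1 (t • x) := by
        rw [lintegral_add_left (show Measurable fun x => G0 ((2 : ℝ) • x) from h0.comp (measurable_const_smul _)),
          lintegral_const_mul' _ _ ENNReal.ofReal_ne_top]
    _ ≤ _ := by
        refine add_le_add (le_of_eq ?_) (mul_le_mul_right ?_ _)
        · rw [lintegral_ann_smul G0 h0 _ _ two_pos]
          congr 3
          congr 1
          ring
        · rw [lintegral_lintegral_swap hm.aemeasurable]
          calc ∫⁻ t in Set.Ioc (1 : ℝ) 2, ∫⁻ x in ann n r (2 * r), G1 (t • x)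
              ≤ ∫⁻ t in Set.Ioc (1 : ℝ) 2, ∫⁻ x in ann n r (4 * r), G1 x := by
                refine setLIntegral_mono' measurableSet_Ioc fun t ht => ?_
                have ht0 : 0 < t := by linarith [ht.1]
                rw [lintegral_ann_smul G1 h1 _ _ ht0]
                have e1 : ENNReal.ofReal (t ^ n)⁻¹ ≤ 1 := by
                  rw [ENNReal.ofReal_le_one]
                  exact inv_le_one_of_one_le₀ (one_le_pow₀ ht.1.le)
                refine (mul_le_of_le_one_left' e1).trans (lintegral_mono_set ?_)
                intro x hx
                exact ⟨by nlinarith [hx.1, ht.1], by nlinarith [hx.2, ht.2]⟩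
            _ = ∫⁻ x in ann n r (4 * r), G1 x := by
                rw [setLIntegral_const, Real.volume_Ioc]
                norm_num

/-- Fundamental theorem of calculus along a ray. -/
lemma ray_bound {φ : Eu n → ℝ} {N j : ℕ} (hj : j + 1 ≤ N) {U : Set (Eu n)} (hU : IsOpen U)
    (hφ : ContDiffOn ℝ N φ U) {x : Eu n} (hx : ∀ t ∈ Set.Icc (1 : ℝ) 2, t • x ∈ U) :
    ‖iteratedFDeriv ℝ j φ x‖ₑ ≤ ‖iteratedFDeriv ℝ j φ ((2 : ℝ) • x)‖ₑ + ENNReal.ofReal ‖x‖ *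
      ∫⁻ t in Set.Ioc (1 : ℝ) 2, ‖iteratedFDeriv ℝ (j + 1) φ (t • x)‖ₑ := by
  set F := iteratedFDeriv ℝ j φ with hF
  have hF1 : ∀ y ∈ U, ContDiffAt ℝ 1 F y := fun y hy =>
    (hφ.contDiffAt (hU.mem_nhds hy)).iteratedFDeriv_right (by exact_mod_cast (by omega))
  have hd : ∀ t ∈ Set.uIcc (1 : ℝ) 2,
      HasDerivAt (fun t : ℝ => F (t • x)) (fderiv ℝ F (t • x) x) t := by
    intro t ht
    rw [Set.uIcc_of_le (by norm_num)] at ht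
    have h1 := ((hF1 _ (hx t ht)).differentiableAt (by norm_num)).hasFDerivAt
    have h2 : HasDerivAt (fun t : ℝ => t • x) x t := by
      simpa using (hasDerivAt_id t).smul_const x
    exact h1.comp_hasDerivAt t h2
  have hc : ContinuousOn (fun t : ℝ => fderiv ℝ F (t • x) x) (Set.uIcc (1 : ℝ) 2) := by
    intro t ht
    rw [Set.uIcc_of_le (by norm_num)] at ht
    have h1 : ContinuousAt (fderiv ℝ F) (t • x) :=
      ((hF1 _ (hx t ht)).fderiv_right (m := 0) (by norm_num)).continuousAt
    have h2 : ContinuousAt (fun t : ℝ => fderiv ℝ F (t • x)) t :=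
      ContinuousAt.comp (f := fun t : ℝ => t • x) (g := fderiv ℝ F) h1
        (by fun_prop)
    exact (h2.clm_apply continuousAt_const).continuousWithinAt
  have hftc := intervalIntegral.integral_eq_sub_of_hasDerivAt hd hc.intervalIntegrable
  rw [one_smul, intervalIntegral.integral_of_le (by norm_num)] at hftc
  have e : F x = F ((2 : ℝ) • x) - ∫ t in Set.Ioc (1 : ℝ) 2, fderiv ℝ F (t • x) x := by
    rw [hftc]; abel
  rw [e]
  refine enorm_sub_le.trans (add_le_add le_rfl ?_)
  refine (enorm_integral_le_lintegral_enorm _).trans ?_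
  rw [← lintegral_const_mul' _ _ ENNReal.ofReal_ne_top]
  refine lintegral_mono fun t => ?_
  rw [ofReal_norm, mul_comm]
  have := (fderiv ℝ F (t • x)).le_opENorm x
  refine this.trans (le_of_eq ?_)
  congr 1
  rw [← ofReal_norm, ← ofReal_norm, hF, norm_fderiv_iteratedFDeriv]

/-- Iterating `a r ≤ 2^{-n} a (2r) + C₁ r^e` down from the scale `r0`: as `e < n`, the power `r^e`
dominates. -/
lemma dyadic_iterate {a : ℝ → ℝ} {r0 e F C1 : ℝ} (hr0 : 0 < r0) (he : e < n) (hF0 : 0 ≤ F)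
    (hC1 : 0 ≤ C1) (hF : ∀ r, 0 < r → r ≤ r0 → a r ≤ F)
    (hs : ∀ r, 0 < r → r ≤ r0 / 2 → a r ≤ (2 ^ n)⁻¹ * a (2 * r) + C1 * r ^ e) :
    ∃ C : ℝ, 0 ≤ C ∧ ∀ r, 0 < r → r ≤ r0 → a r ≤ C * r ^ e := by
  have hq : (2 : ℝ) ^ (e - n) < 1 := Real.rpow_lt_one_of_one_lt_of_neg one_lt_two (by linarith)
  have hq' : 0 < 1 - (2 : ℝ) ^ (e - n) := by linarith
  -- `F₁` bounds `a r * r ^ (-e)` on the top dyadic shell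
  set F₁ := F * ((r0 / 2) ^ (-e) + r0 ^ (-e)) with hF₁
  have hF₁0 : 0 ≤ F₁ := by positivity
  set C := F₁ + C1 / (1 - 2 ^ (e - n)) with hC
  have hC10 : 0 ≤ C1 / (1 - (2 : ℝ) ^ (e - n)) := by positivity
  refine ⟨C, by positivity, ?_⟩
  have main : ∀ m : ℕ, ∀ r, r0 / 2 / 2 ^ m < r → r ≤ r0 → a r ≤ C * r ^ e := by
    intro m
    induction m with
    | zero =>
      intro r h1 h2
      simp only [pow_zero, div_one] at h1
      have hr : 0 < r := by linarith
      have h3 : r ^ (-e) ≤ (r0 / 2) ^ (-e) + r0 ^ (-e) := by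
        rcases le_total 0 e with h0 | h0
        · have := Real.rpow_le_rpow_of_nonpos (by positivity) h1.le (neg_nonpos.2 h0)
          have := Real.rpow_nonneg hr0.le (-e)
          linarith
        · have := Real.rpow_le_rpow hr.le h2 (neg_nonneg.2 h0)
          have := Real.rpow_nonneg (half_pos hr0).le (-e)
          linarith
      have h4 : r ^ (-e) * r ^ e = 1 := by rw [← Real.rpow_add hr]; simp
      have h5 : 0 < r ^ e := by positivity
      calc a r ≤ F := hF r hr h2
        _ = F * r ^ (-e) * r ^ e := by rw [mul_assoc, h4, mul_one]
        _ ≤ F₁ * r ^ e := by rw [hF₁]; gcongr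
        _ ≤ C * r ^ e := by gcongr; linarith
    | succ m ih =>
      intro r h1 h2
      rcases le_or_gt r (r0 / 2) with h | h
      · have hr : 0 < r := lt_trans (by positivity) h1
        have h3 := ih (2 * r) (by
          rw [pow_succ, ← div_div, div_lt_iff₀ two_pos] at h1; linarith) (by linarith)
        have h4 := hs r hr h
        have h5 : ((2 : ℝ) ^ n)⁻¹ * (2 * r) ^ e = 2 ^ (e - n) * r ^ e := by
          rw [Real.mul_rpow zero_le_two hr.le, Real.rpow_sub two_pos, Real.rpow_natCast]
          field_simp
        have h6 : C1 ≤ C * (1 - 2 ^ (e - n)) := by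
          rw [← div_le_iff₀ hq']; linarith
        have h7 : 0 < r ^ e := by positivity
        calc a r ≤ (2 ^ n)⁻¹ * (C * (2 * r) ^ e) + C1 * r ^ e := h4.trans (by gcongr)
          _ = (C * 2 ^ (e - n) + C1) * r ^ e := by linear_combination C * h5
          _ ≤ C * r ^ e := by gcongr; linarith
      · refine ih r (lt_of_le_of_lt ?_ h) h2
        exact div_le_self (by positivity) (one_le_pow₀ (by norm_num))
  intro r hr hr'
  obtain ⟨m, hm⟩ := exists_pow_lt_of_lt_one (show 0 < r / (r0 / 2) by positivity)
    (show (1 / 2 : ℝ) < 1 by norm_num)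
  refine main m r ?_ hr'
  rw [one_div, inv_pow, lt_div_iff₀ (by positivity)] at hm
  rw [div_eq_inv_mul]
  exact hm

/-- Finite energy near the origin gives decay of the mass of `φ` on small annuli: the mass of
`∇^k φ` is `O(r^{n/2})` by Cauchy-Schwarz, and each integration along rays gains a factor `r`. -/
lemma mass_decay {k : ℕ} (hk : 1 ≤ k) (hn : 2 * k < n) {φ : Eu n → ℝ} {δ : ℝ} (hδ : 0 < δ)
    (hφ : ContDiffOn ℝ (2 * k : ℕ) φ (ball 0 δ \ {0}))
    (hE : ∀ j ≤ k, IntegrableOn (fun x => ‖iteratedFDeriv ℝ j φ x‖ ^ 2) (ball 0 δ)) :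
    ∃ C : ℝ, 0 ≤ C ∧ ∀ r, 0 < r → r ≤ δ / 4 →
      ∫ x in ann n r (2 * r), |φ x| ≤ C * r ^ ((n : ℝ) / 2 + k) := by
  have hU : IsOpen (ball (0 : Eu n) δ \ {0}) := isOpen_ball.sdiff isClosed_singleton
  set U := ball (0 : Eu n) δ \ {0} with hUdef
  have hkn : 2 * (k : ℝ) < n := by exact_mod_cast hn
  set g : ℕ → Eu n → ℝ := fun j x => ‖iteratedFDeriv ℝ j φ x‖ with hg
  have hsub : ∀ r s : ℝ, s < δ → ann n r s ⊆ ball 0 δ := fun r s hs x hx => by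
    rw [mem_ball_zero_iff]; exact hx.2.trans_lt hs
  have hsubU : ∀ r s : ℝ, 0 ≤ r → s < δ → ann n r s ⊆ U := fun r s hr hs x hx =>
    ⟨hsub r s hs hx, norm_pos_iff.1 (hr.trans_lt hx.1)⟩
  have hgint : ∀ j ≤ k, IntegrableOn (g j) (ball 0 δ) := by
    intro j hj
    have h1 := hE j hj
    have hfin : IntegrableOn (fun _ : Eu n => (1 : ℝ)) (ball 0 δ) :=
      integrableOn_const measure_ball_lt_top.ne
    refine Integrable.mono' (h1.add hfin) ?_ (Eventually.of_forall fun x => ?_)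
    · have := (Real.continuous_sqrt.comp_aestronglyMeasurable h1.1)
      refine this.congr (Eventually.of_forall fun x => ?_)
      exact Real.sqrt_sq (norm_nonneg _)
    · simp only [hg, norm_norm, Pi.add_apply]
      nlinarith [sq_nonneg (‖iteratedFDeriv ℝ j φ x‖ - 1)]
  set a : ℕ → ℝ → ℝ := fun j r => ∫ x in ann n r (2 * r), g j x with ha
  have hg0 : ∀ j x, 0 ≤ g j x := fun j x => norm_nonneg _
  have hstep : ∀ j < k, ∀ r, 0 < r → r ≤ δ / 8 →
      a j r ≤ (2 ^ n)⁻¹ * a j (2 * r) + 2 * r * (a (j + 1) r + a (j + 1) (2 * r)) := by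
    intro j hj r hr hr8
    have h4 : 4 * r < δ := by linarith
    set G : ℕ → Eu n → ℝ≥0∞ := fun i => U.indicator fun x => ‖iteratedFDeriv ℝ i φ x‖ₑ with hG
    have hGm : ∀ i ≤ k, Measurable (G i) := by
      intro i hi
      have hc : ContinuousOn (fun x => ‖iteratedFDeriv ℝ i φ x‖ₑ) U := by
        intro x hx
        have : ContDiffAt ℝ 0 (iteratedFDeriv ℝ i φ) x :=
          (hφ.contDiffAt (hU.mem_nhds hx)).iteratedFDeriv_right (by exact_mod_cast (by omega))
        exact this.continuousAt.enorm.continuousWithinAt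
      classical
      have := hc.measurable_piecewise (g := 0) continuous_zero.continuousOn hU.measurableSet
      rw [Set.piecewise_eq_indicator] at this
      exact this
    have hGeq : ∀ i ≤ k, ∀ r s, 0 < r → s < δ →
        ∫⁻ x in ann n r s, G i x = ENNReal.ofReal (∫ x in ann n r s, g i x) := by
      intro i hi r s hr hs
      rw [ofReal_integral_eq_lintegral_ofReal ((hgint i hi).mono_set (hsub r s hs))
        (Eventually.of_forall (hg0 i))]
      refine setLIntegral_congr_fun (measurableSet_ann _ _) fun x hx => ?_
      simp only [hG, hg, Set.indicator_of_mem (hsubU r s hr.le hs hx), ofReal_norm]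
    have key := dyadic_step (hGm j (by omega)) (hGm (j + 1) (by omega)) hr (by
      intro x hx
      have hxU : ∀ t ∈ Set.Icc (1 : ℝ) 2, t • x ∈ U := by
        intro t ht
        refine ⟨?_, ?_⟩
        · rw [mem_ball_zero_iff, norm_smul, Real.norm_eq_abs, abs_of_pos (by linarith [ht.1])]
          nlinarith [ht.2, hx.2, ht.1, hx.1]
        · have : x ≠ 0 := norm_pos_iff.1 (hr.trans hx.1)
          exact smul_ne_zero (by linarith [ht.1]) this
      have h1 := ray_bound (j := j) (by omega) hU hφ hxU
      have e1 : G j x = ‖iteratedFDeriv ℝ j φ x‖ₑ :=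
        Set.indicator_of_mem (by simpa using hxU 1 (by norm_num)) _
      have e2 : G j ((2 : ℝ) • x) = ‖iteratedFDeriv ℝ j φ ((2 : ℝ) • x)‖ₑ :=
        Set.indicator_of_mem (hxU 2 (by norm_num)) _
      have e3 : ∫⁻ t in Set.Ioc (1 : ℝ) 2, G (j + 1) (t • x)
          = ∫⁻ t in Set.Ioc (1 : ℝ) 2, ‖iteratedFDeriv ℝ (j + 1) φ (t • x)‖ₑ :=
        setLIntegral_congr_fun measurableSet_Ioc fun t ht =>
          Set.indicator_of_mem (hxU t (Set.Ioc_subset_Icc_self ht)) _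
      rw [e1, e2, e3]
      exact h1)
    rw [hGeq j hj.le _ _ hr (by linarith), hGeq j hj.le _ _ (by linarith) h4,
      hGeq (j + 1) hj _ _ hr h4, ← ENNReal.ofReal_mul (by positivity),
      ← ENNReal.ofReal_mul (by positivity),
      ← ENNReal.ofReal_add
        (mul_nonneg (by positivity) (integral_nonneg fun x => hg0 _ x))
        (mul_nonneg (by positivity) (integral_nonneg fun x => hg0 _ x)),
      ENNReal.ofReal_le_ofReal_iff (add_nonneg
        (mul_nonneg (by positivity) (integral_nonneg fun x => hg0 _ x))
        (mul_nonneg (by positivity) (integral_nonneg fun x => hg0 _ x)))] at key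
    have e4 : 2 * (2 * r) = 4 * r := by ring
    have hun : ann n r (4 * r) = ann n r (2 * r) ∪ ann n (2 * r) (4 * r) := by
      ext x
      simp only [ann, Set.mem_union, Set.mem_ofPred_eq]
      constructor
      · rintro ⟨h1, h2⟩
        rcases le_or_gt ‖x‖ (2 * r) with h | h
        · exact Or.inl ⟨h1, h⟩
        · exact Or.inr ⟨h, h2⟩
      · rintro (⟨h1, h2⟩ | ⟨h1, h2⟩)
        · exact ⟨h1, by linarith⟩
        · exact ⟨by linarith, h2⟩
    have hdis : Disjoint (ann n r (2 * r)) (ann n (2 * r) (4 * r)) :=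
      Set.disjoint_left.2 fun x h1 h2 => absurd h1.2 (not_le.2 h2.1)
    rw [hun, setIntegral_union hdis (measurableSet_ann _ _)
      ((hgint (j + 1) hj).mono_set (hsub _ _ (by linarith)))
      ((hgint (j + 1) hj).mono_set (hsub _ _ h4))] at key
    simp only [ha, e4]
    exact key
  have hbd : ∀ j ≤ k, ∀ r, 0 < r → r ≤ δ / 4 → a j r ≤ ∫ x in ball 0 δ, g j x := by
    intro j hj r hr hr4
    exact setIntegral_mono_set (hgint j hj) (Eventually.of_forall (hg0 j))
      (hsub _ _ (by linarith)).eventuallyLE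
  have main : ∀ i ≤ k, ∃ C : ℝ, 0 ≤ C ∧ ∀ r, 0 < r → r ≤ δ / 4 →
      a (k - i) r ≤ C * r ^ ((n : ℝ) / 2 + i) := by
    intro i
    induction i with
    | zero =>
      intro _
      set Q := ∫ x in ball (0 : Eu n) δ, g k x ^ 2 with hQ
      have hQ0 : 0 ≤ Q := integral_nonneg fun x => by positivity
      set b := (volume : Measure (Eu n)).real (ball 0 1) with hb
      have hb0 : 0 ≤ b := ENNReal.toReal_nonneg
      refine ⟨Q + 2 ^ n * b, by positivity, fun r hr hr4 => ?_⟩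
      simp only [Nat.sub_zero, Nat.cast_zero, add_zero]
      set q := r ^ ((n : ℝ) / 2) with hq
      have hq0 : 0 < q := by positivity
      have hqq : q * q = r ^ n := by
        rw [hq, ← Real.rpow_add hr, ← Real.rpow_natCast]; congr 1; ring
      have h2r : 2 * r < δ := by linarith
      have hvol : (volume : Measure (Eu n)).real (ann n r (2 * r)) ≤ (2 * r) ^ n * b := by
        have : (volume : Measure (Eu n)).real (closedBall 0 (2 * r)) = (2 * r) ^ n * b := by
          rw [Measure.real, Measure.addHaar_closedBall _ _ (by positivity), ENNReal.toReal_mul,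
            ENNReal.toReal_ofReal (by positivity), finrank_euclideanSpace, Fintype.card_fin]
          rfl
        rw [← this]
        exact measureReal_mono (fun x hx => by
          rw [mem_closedBall_zero_iff]; exact hx.2) measure_closedBall_lt_top.ne
      have hIsq : IntegrableOn (fun x => g k x ^ 2) (ann n r (2 * r)) :=
        (hE k le_rfl).mono_set (hsub _ _ h2r)
      have hfin : IntegrableOn (fun _ : Eu n => q⁻¹) (ann n r (2 * r)) :=
        integrableOn_const ((measure_mono (hsub _ _ h2r)).trans_lt measure_ball_lt_top).ne
      -- Cauchy-Schwarz on the annulus, in the form `2 g ≤ q g² + q⁻¹` with `q = r ^ (n/2)`.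
      calc a k r ≤ ∫ x in ann n r (2 * r), (q * g k x ^ 2 + q⁻¹) := by
            refine integral_mono ((hgint k le_rfl).mono_set (hsub _ _ h2r))
              ((hIsq.const_mul q).add hfin) fun x => ?_
            have h1 : q * q⁻¹ = 1 := mul_inv_cancel₀ hq0.ne'
            have h2 : 0 < q⁻¹ := by positivity
            have h3 : 0 ≤ q⁻¹ * (q * g k x - 1) ^ 2 := by positivity
            have h4 : q⁻¹ * (q * g k x - 1) ^ 2 = q * g k x ^ 2 - 2 * g k x + q⁻¹ := by
              field_simp
              ring
            have := hg0 k x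
            simp only
            linarith
        _ = q * (∫ x in ann n r (2 * r), g k x ^ 2)
            + (volume : Measure (Eu n)).real (ann n r (2 * r)) * q⁻¹ := by
            rw [integral_add (hIsq.const_mul q) hfin, integral_const_mul, setIntegral_const,
              smul_eq_mul]
        _ ≤ q * Q + (2 * r) ^ n * b * q⁻¹ := by
            refine add_le_add (mul_le_mul_of_nonneg_left ?_ hq0.le)
              (mul_le_mul_of_nonneg_right hvol (by positivity))
            exact setIntegral_mono_set (hE k le_rfl) (Eventually.of_forall fun x => by positivity)
              (hsub _ _ h2r).eventuallyLE
        _ = (Q + 2 ^ n * b) * q := by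
            rw [mul_pow, ← hqq]; field_simp
    | succ i ih =>
      intro hi
      obtain ⟨C, hC0, hC⟩ := ih (by omega)
      have hik : (i : ℝ) + 1 ≤ k := by exact_mod_cast hi
      refine dyadic_iterate (n := n) (r0 := δ / 4)
        (F := ∫ x in ball 0 δ, g (k - (i + 1)) x)
        (C1 := 2 * (C + C * 2 ^ ((n : ℝ) / 2 + i))) (by positivity) ?_
        (integral_nonneg (hg0 _)) (by positivity) (hbd _ (by omega)) ?_
      · push_cast; linarith
      · intro r hr hr8
        have h1 := hstep (k - (i + 1)) (by omega) r hr (by linarith)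
        have e : k - (i + 1) + 1 = k - i := by omega
        rw [e] at h1
        have h2 := hC r hr (by linarith)
        have h3 := hC (2 * r) (by linarith) (by linarith)
        rw [Real.mul_rpow zero_le_two hr.le] at h3
        have e2 : r ^ ((n : ℝ) / 2 + ((i + 1 : ℕ) : ℝ)) = r ^ ((n : ℝ) / 2 + i) * r := by
          rw [← Real.rpow_add_one hr.ne']; congr 1; push_cast; ring
        rw [e2]
        have h4 := mul_le_mul_of_nonneg_left (add_le_add h2 h3) (show 0 ≤ 2 * r by positivity)
        linarith
  obtain ⟨C, hC0, hC⟩ := main k le_rfl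
  refine ⟨C, hC0, fun r hr hr4 => ?_⟩
  have := hC r hr hr4
  simp only [ha, hg, Nat.sub_self, norm_iteratedFDeriv_zero, Real.norm_eq_abs] at this
  exact this

end Hardy

/-! ### The maximum principle -/

section Maximum

set_option maxSynthPendingDepth 3

open scoped ContDiff

variable {n : ℕ}

lemma lap_nonpos_of_isLocalMax {f : Eu n → ℝ} {z : Eu n} (hf : ContDiffAt ℝ 2 f z)
    (hm : IsLocalMax f z) : lap f z ≤ 0 := by
  rw [lap_eq_sum_fderiv hf]
  refine Finset.sum_nonpos fun i _ => ?_
  by_contra! hpos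
  set g : ℝ → ℝ := fun t => f (z + t • ei i) with hg
  have hline : ∀ t : ℝ, HasDerivAt (fun t : ℝ => z + t • (ei i : Eu n)) (ei i) t := fun t => by
    simpa using ((hasDerivAt_id t).smul_const (ei i : Eu n)).const_add z
  have hcont : Tendsto (fun t : ℝ => z + t • (ei i : Eu n)) (𝓝 0) (𝓝 z) := by
    have := (hline 0).continuousAt.tendsto
    simpa using this
  have hd1 : ∀ᶠ t in 𝓝 (0 : ℝ), deriv g t = fderiv ℝ f (z + t • ei i) (ei i) := by
    have h1 : ∀ᶠ y in 𝓝 z, ContDiffAt ℝ 2 f y := hf.eventually (by simp)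
    filter_upwards [hcont.eventually h1] with t ht
    exact ((ht.differentiableAt (by norm_num)).hasFDerivAt.comp_hasDerivAt t (hline t)).deriv
  have hd2 : deriv (deriv g) 0 = fderiv ℝ (fun y => fderiv ℝ f y (ei i)) z (ei i) := by
    rw [EventuallyEq.deriv_eq hd1]
    have h1 : ContDiffAt ℝ 1 (fun y => fderiv ℝ f y (ei i)) z :=
      (hf.fderiv_right (m := 1) (by norm_num)).clm_apply contDiffAt_const
    have h2 : HasFDerivAt (fun y => fderiv ℝ f y (ei i))
        (fderiv ℝ (fun y => fderiv ℝ f y (ei i)) z) (z + (0 : ℝ) • ei i) := by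
      simpa using (h1.differentiableAt (by norm_num)).hasFDerivAt
    exact (h2.comp_hasDerivAt 0 (hline 0)).deriv
  have hmax : IsLocalMax g 0 := by
    have : ∀ᶠ y in 𝓝 z, f y ≤ f z := hm
    filter_upwards [hcont.eventually this] with t ht
    simpa [hg] using ht
  have hmin : IsLocalMin g 0 := by
    refine isLocalMin_of_deriv_deriv_pos (by rw [hd2]; exact hpos) hmax.deriv_eq_zero ?_
    have h2 : ContinuousAt f (z + (0 : ℝ) • ei i) := by simpa using hf.continuousAt
    exact ContinuousAt.comp (f := fun t : ℝ => z + t • (ei i : Eu n)) (g := f) (x := 0) h2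
      (hline 0).continuousAt
  have hconst : g =ᶠ[𝓝 0] fun _ => g 0 := by
    filter_upwards [hmax, hmin] with t h1 h2 using le_antisymm h1 h2
  have : deriv (deriv g) 0 = 0 := by
    have h1 : deriv g =ᶠ[𝓝 0] deriv fun _ => g 0 := hconst.deriv
    rw [h1.deriv_eq]
    simp
  rw [hd2] at this
  linarith

/-- A function on a punctured ball that tends to `0` at the puncture is bounded above by `0`, or
attains a nonnegative maximum. -/
lemma exists_max_punctured {q : Eu n → ℝ} {ρ : ℝ} (hρ : 0 ≤ ρ)
    (hq : ContinuousOn q (closedBall 0 ρ \ {0})) (h0 : Tendsto q (𝓝[≠] 0) (𝓝 0)) :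
    ∃ M, 0 ≤ M ∧ (∀ x, x ≠ 0 → ‖x‖ ≤ ρ → q x ≤ M) ∧
      (M = 0 ∨ ∃ z, z ≠ 0 ∧ ‖z‖ ≤ ρ ∧ q z = M) := by
  classical
  have hc : ContinuousOn (Function.update q 0 0) (closedBall (0 : Eu n) ρ) := by
    rw [continuousOn_update_iff]
    exact ⟨hq, fun _ => h0.mono_left (nhdsWithin_mono _ fun x hx => hx.2)⟩
  obtain ⟨z, hz, hmax⟩ := (isCompact_closedBall (0 : Eu n) ρ).exists_isMaxOn
    ⟨0, by simpa using hρ⟩ hc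
  refine ⟨Function.update q 0 0 z, ?_, ?_, ?_⟩
  · have := hmax (show (0 : Eu n) ∈ closedBall 0 ρ by simpa using hρ)
    simpa using this
  · intro x hx hxρ
    have := hmax (show x ∈ closedBall 0 ρ by simpa using hxρ)
    simpa [Function.update_of_ne hx] using this
  · by_cases h : z = 0
    · left; subst h; simp
    · right
      exact ⟨z, h, by simpa using hz, by rw [Function.update_of_ne h]⟩

/-- One-sided comparison with a positive supersolution on a punctured ball. -/
lemma comparison_aux {v W W' : Eu n → ℝ} {ρ A B c : ℝ} (hρ : 0 < ρ) (hA : 0 ≤ A) (hB : 0 ≤ B)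
    (hc : 0 < c) (hv : ∀ x, x ≠ 0 → ‖x‖ ≤ ρ → ContDiffAt ℝ 2 v x)
    (hW : ∀ x, x ≠ 0 → ContDiffAt ℝ 2 W x) (hW0 : ∀ x, x ≠ 0 → 0 < W x)
    (hW'0 : ∀ x, x ≠ 0 → 0 < W' x)
    (hlv : ∀ x, x ≠ 0 → ‖x‖ ≤ ρ → |lap v x| ≤ A * W' x)
    (hlW : ∀ x, x ≠ 0 → lap W x ≤ -(c * W' x))
    (hbd : ∀ x, ‖x‖ = ρ → v x ≤ B * W x)
    (hlim : Tendsto (fun x => v x / W x) (𝓝[≠] 0) (𝓝 0)) :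
    ∀ x, x ≠ 0 → ‖x‖ ≤ ρ → v x ≤ (A / c + B) * W x := by
  have hqc : ContinuousOn (fun x => v x / W x) (closedBall 0 ρ \ {0}) := by
    intro x hx
    have hx0 : x ≠ 0 := hx.2
    exact ((hv x hx0 (by simpa using hx.1)).continuousAt.div (hW x hx0).continuousAt
      (hW0 x hx0).ne').continuousWithinAt
  obtain ⟨M, hM0, hM, hMz⟩ := exists_max_punctured hρ.le hqc hlim
  have hAc : 0 ≤ A / c := by positivity
  have hMK : M ≤ A / c + B := by
    rcases hMz with h | ⟨z, hz0, hzρ, hz⟩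
    · rw [h]; positivity
    rcases hzρ.eq_or_lt with h1 | h1
    · have : M ≤ B := by rw [← hz, div_le_iff₀ (hW0 z hz0)]; exact hbd z h1
      linarith
    by_contra! hlt
    have hmax : IsLocalMax (fun x => v x - M * W x) z := by
      have e1 : ∀ᶠ x : Eu n in 𝓝 z, ‖x‖ < ρ := continuous_norm.continuousAt.eventually_lt_const h1
      filter_upwards [isOpen_ne.mem_nhds hz0, e1] with x hx0 hx
      have h2 := hM x hx0 hx.le
      rw [div_le_iff₀ (hW0 x hx0)] at h2
      rw [div_eq_iff (hW0 z hz0).ne'] at hz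
      linarith
    have h3 := lap_nonpos_of_isLocalMax
      ((hv z hz0 hzρ).sub (contDiffAt_const.mul (hW z hz0))) hmax
    rw [lap_sub (hv z hz0 hzρ) (contDiffAt_const.mul (hW z hz0)), lap_const_mul (hW z hz0)] at h3
    have h4 := (abs_le.1 (hlv z hz0 hzρ)).1
    have h5 := mul_le_mul_of_nonneg_left (hlW z hz0) hM0
    have h6 : M * c * W' z ≤ A * W' z := by linarith
    have h7 := le_of_mul_le_mul_right h6 (hW'0 z hz0)
    rw [← le_div_iff₀ hc] at h7
    linarith
  intro x hx hxρ
  have h1 := hM x hx hxρ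
  rw [div_le_iff₀ (hW0 x hx)] at h1
  exact h1.trans (mul_le_mul_of_nonneg_right hMK (hW0 x hx).le)

lemma comparison {v W W' : Eu n → ℝ} {ρ A B c : ℝ} (hρ : 0 < ρ) (hA : 0 ≤ A) (hB : 0 ≤ B)
    (hc : 0 < c) (hv : ∀ x, x ≠ 0 → ‖x‖ ≤ ρ → ContDiffAt ℝ 2 v x)
    (hW : ∀ x, x ≠ 0 → ContDiffAt ℝ 2 W x) (hW0 : ∀ x, x ≠ 0 → 0 < W x)
    (hW'0 : ∀ x, x ≠ 0 → 0 < W' x)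
    (hlv : ∀ x, x ≠ 0 → ‖x‖ ≤ ρ → |lap v x| ≤ A * W' x)
    (hlW : ∀ x, x ≠ 0 → lap W x ≤ -(c * W' x))
    (hbd : ∀ x, ‖x‖ = ρ → |v x| ≤ B * W x)
    (hlim : Tendsto (fun x => v x / W x) (𝓝[≠] 0) (𝓝 0)) :
    ∀ x, x ≠ 0 → ‖x‖ ≤ ρ → |v x| ≤ (A / c + B) * W x := by
  intro x hx hxρ
  refine abs_le'.2 ⟨?_, ?_⟩
  · exact comparison_aux hρ hA hB hc hv hW hW0 hW'0 hlv hlW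
      (fun y hy => (le_abs_self _).trans (hbd y hy)) hlim x hx hxρ
  · have e : ∀ y, y ≠ 0 → ‖y‖ ≤ ρ → lap (fun y => -1 * v y) y = -1 * lap v y := fun y hy hyρ =>
      lap_const_mul (hv y hy hyρ) (-1)
    have := comparison_aux (v := fun y => -1 * v y) hρ hA hB hc
      (fun y hy hyρ => contDiffAt_const.mul (hv y hy hyρ)) hW hW0 hW'0
      (fun y hy hyρ => by rw [e y hy hyρ, abs_mul]; simpa using hlv y hy hyρ) hlW
      (fun y hy => by
        have := (neg_le_abs _).trans (hbd y hy)
        linarith)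
      (by simpa [neg_div] using hlim.neg) x hx hxρ
    linarith

/-- The comparison functions `‖x‖^{-γ-2j} + ε ‖x‖^{-γ'-2j}`. -/
def cmpW (n : ℕ) (γ γ' ε : ℝ) (j : ℕ) (x : Eu n) : ℝ :=
  ‖x‖ ^ (-γ - 2 * j) + ε * ‖x‖ ^ (-γ' - 2 * j)

lemma cmpW_pos {γ γ' ε : ℝ} (hε : 0 < ε) (j : ℕ) {x : Eu n} (hx : x ≠ 0) :
    0 < cmpW n γ γ' ε j x := by
  have : 0 < ‖x‖ := norm_pos_iff.2 hx
  unfold cmpW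
  positivity

lemma contDiffAt_cmpW (γ γ' ε : ℝ) (j : ℕ) {x : Eu n} (hx : x ≠ 0) :
    ContDiffAt ℝ 2 (cmpW n γ γ' ε j) x :=
  (contDiffAt_norm_rpow _ hx).add (contDiffAt_const.mul (contDiffAt_norm_rpow _ hx))

/-- Each comparison function is a strict supersolution relative to the next one, with a constant
that does not depend on `ε`. -/
lemma lap_cmpW_le {k j : ℕ} (hj : j < k) {γ γ' ε c : ℝ} (hε : 0 < ε)
    (hγ : 0 < γ) (hγ' : 0 < γ') (hγn : γ < n - 2 * k) (hγn' : γ' < n - 2 * k)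
    (hc1 : c ≤ γ * (n - 2 * k - γ)) (hc2 : c ≤ γ' * (n - 2 * k - γ')) {x : Eu n} (hx : x ≠ 0) :
    lap (cmpW n γ γ' ε j) x ≤ -(c * cmpW n γ γ' ε (j + 1) x) := by
  have hpos : 0 < ‖x‖ := norm_pos_iff.2 hx
  have hjk : (j : ℝ) + 1 ≤ k := by exact_mod_cast hj
  have hj0 : (0 : ℝ) ≤ j := by positivity
  have key : ∀ g : ℝ, 0 < g → g < n - 2 * k → c ≤ g * (n - 2 * k - g) →
      lap (fun y : Eu n => ‖y‖ ^ (-g - 2 * (j : ℝ))) x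
        ≤ -(c * ‖x‖ ^ (-g - 2 * ((j + 1 : ℕ) : ℝ))) := by
    intro g hg hgn hcg
    rw [lap_norm_rpow _ hx]
    have e : -g - 2 * (j : ℝ) - 2 = -g - 2 * ((j + 1 : ℕ) : ℝ) := by push_cast; ring
    rw [e]
    have h1 : g * (n - 2 * k - g) ≤ (g + 2 * j) * (n - 2 - g - 2 * j) := by
      apply mul_le_mul <;> linarith
    have h2 : 0 < ‖x‖ ^ (-g - 2 * ((j + 1 : ℕ) : ℝ)) := by positivity
    nlinarith
  have e : cmpW n γ γ' ε j = fun y : Eu n => ‖y‖ ^ (-γ - 2 * (j : ℝ))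
      + ε * ‖y‖ ^ (-γ' - 2 * (j : ℝ)) := rfl
  rw [e, lap_add (contDiffAt_norm_rpow _ hx) (contDiffAt_const.mul (contDiffAt_norm_rpow _ hx)),
    lap_const_mul (contDiffAt_norm_rpow _ hx)]
  have h1 := key γ hγ hγn hc1
  have h2 := mul_le_mul_of_nonneg_left (key γ' hγ' hγn' hc2) hε.le
  unfold cmpW
  linarith

set_option maxHeartbeats 1000000 in
/-- Iterating the comparison principle `k` times, from `Δ^k φ` down to `φ`, bounds `φ` by the
boundary data alone. The term `ε ‖x‖^{-γ'}` makes the comparison functions dominate the a priori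
growth `‖x‖^{-σ}` at the puncture; the resulting bound is uniform in `ε`. -/
lemma sup_bound {k : ℕ} {γ γ' σ c η ρ B : ℝ} {φ : Eu n → ℝ}
    (hγ : 0 < γ) (hγ' : 0 < γ') (hγn : γ < n - 2 * k) (hγn' : γ' < n - 2 * k) (hσ : σ < γ')
    (hc : 0 < c) (hc1 : c ≤ γ * (n - 2 * k - γ)) (hc2 : c ≤ γ' * (n - 2 * k - γ'))
    (hη0 : 0 ≤ η) (hη : η ≤ c ^ k / 2) (hρ : 0 < ρ) (hB : 0 ≤ B)
    (hk : 1 ≤ k)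
    (h1 : ∀ x, x ≠ 0 → ‖x‖ ≤ ρ → ContDiffAt ℝ (2 * k : ℕ) φ x)
    (h2 : ∀ x, x ≠ 0 → ‖x‖ ≤ ρ → ‖x‖ ^ (2 * k) * |iterLap k φ x| ≤ η * |φ x|)
    (h3 : ∀ j < k, ∀ x, ‖x‖ = ρ → |iterLap j φ x| ≤ B * ‖x‖ ^ (-γ - 2 * j))
    (h4 : ∀ j < k, ∃ D r, 0 < r ∧
      ∀ x, x ≠ 0 → ‖x‖ ≤ r → |iterLap j φ x| ≤ D * ‖x‖ ^ (-σ - 2 * j)) :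
    ∀ x, x ≠ 0 → ‖x‖ ≤ ρ →
      |φ x| ≤ 2 * (∑ j ∈ Finset.range k, (1 / c) ^ j) * B * ‖x‖ ^ (-γ) := by
  set S := ∑ j ∈ Finset.range k, (1 / c) ^ j with hS
  have hS0 : 0 ≤ S := Finset.sum_nonneg fun _ _ => by positivity
  have main : ∀ ε : ℝ, 0 < ε → ∀ x, x ≠ 0 → ‖x‖ ≤ ρ → |φ x| ≤ 2 * S * B * cmpW n γ γ' ε 0 x := by
    intro ε hε
    have hlim : ∀ j < k, Tendsto (fun x => iterLap j φ x / cmpW n γ γ' ε j x) (𝓝[≠] 0) (𝓝 0) := by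
      intro j hj
      obtain ⟨D, r, hr, hD⟩ := h4 j hj
      have t1 : Tendsto (fun x : Eu n => D / ε * ‖x‖ ^ (γ' - σ)) (𝓝[≠] 0) (𝓝 0) := by
        have : ContinuousAt (fun x : Eu n => D / ε * ‖x‖ ^ (γ' - σ)) 0 :=
          continuousAt_const.mul (continuous_norm.continuousAt.rpow_const
            (Or.inr (by linarith)))
        have h := this.tendsto
        rw [norm_zero, Real.zero_rpow (by linarith), mul_zero] at h
        exact h.mono_left nhdsWithin_le_nhds
      refine squeeze_zero_norm' ?_ t1
      have e1 : ∀ᶠ x : Eu n in 𝓝[≠] 0, ‖x‖ < r :=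
        (continuous_norm.continuousAt.eventually_lt_const (by simpa using hr)).filter_mono
          nhdsWithin_le_nhds
      filter_upwards [e1, self_mem_nhdsWithin] with x hx hx0
      have hx0 : x ≠ 0 := hx0
      have hpos : 0 < ‖x‖ := norm_pos_iff.2 hx0
      have hWp := cmpW_pos (γ := γ) (γ' := γ') hε j hx0
      rw [norm_div, Real.norm_eq_abs, Real.norm_eq_abs, abs_of_pos hWp, div_le_iff₀ hWp]
      have hb := hD x hx0 hx.le
      have hDn : 0 ≤ D := by
        have h5 : 0 < ‖x‖ ^ (-σ - 2 * (j : ℝ)) := by positivity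
        have := (abs_nonneg _).trans hb
        exact nonneg_of_mul_nonneg_left this h5
      have e2 : D / ε * ‖x‖ ^ (γ' - σ) * (ε * ‖x‖ ^ (-γ' - 2 * (j : ℝ)))
          = D * ‖x‖ ^ (-σ - 2 * (j : ℝ)) := by
        have : ‖x‖ ^ (γ' - σ) * ‖x‖ ^ (-γ' - 2 * (j : ℝ)) = ‖x‖ ^ (-σ - 2 * (j : ℝ)) := by
          rw [← Real.rpow_add hpos]; congr 1; ring
        rw [← this]; field_simp
      refine hb.trans (e2 ▸ ?_)
      refine mul_le_mul_of_nonneg_left ?_ (by positivity)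
      unfold cmpW
      have : 0 < ‖x‖ ^ (-γ - 2 * (j : ℝ)) := by positivity
      linarith
    have hcd : ∀ j < k, ∀ x, x ≠ 0 → ‖x‖ ≤ ρ → ContDiffAt ℝ 2 (iterLap j φ) x := by
      intro j hj x hx hxρ
      exact_mod_cast contDiffAt_iterLap j (m := 2) (h1 x hx hxρ) (by omega)
    have hqc : ContinuousOn (fun x => |φ x| / cmpW n γ γ' ε 0 x) (closedBall 0 ρ \ {0}) := by
      intro x hx
      have hx0 : x ≠ 0 := hx.2
      exact ((h1 x hx0 (by simpa using hx.1)).continuousAt.abs.div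
        (contDiffAt_cmpW γ γ' ε 0 hx0).continuousAt (cmpW_pos hε 0 hx0).ne').continuousWithinAt
    have hq0 : Tendsto (fun x => |φ x| / cmpW n γ γ' ε 0 x) (𝓝[≠] 0) (𝓝 0) := by
      have := (hlim 0 (by omega)).abs
      rw [abs_zero] at this
      refine this.congr' ?_
      filter_upwards [self_mem_nhdsWithin] with x hx
      rw [abs_div, abs_of_pos (cmpW_pos hε 0 hx), iterLap_zero]
    -- `M` is the best constant in `|φ| ≤ M * cmpW`; feeding it into the equation and comparing `k`
    -- times returns at most `M / 2` plus boundary data.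
    obtain ⟨M, hM0, hM, hMz⟩ := exists_max_punctured hρ.le hqc hq0
    have hMle : ∀ x, x ≠ 0 → ‖x‖ ≤ ρ → |φ x| ≤ M * cmpW n γ γ' ε 0 x := fun x hx hxρ => by
      have := hM x hx hxρ
      rwa [div_le_iff₀ (cmpW_pos hε 0 hx)] at this
    have hind : ∀ i ≤ k, ∀ x, x ≠ 0 → ‖x‖ ≤ ρ → |iterLap (k - i) φ x|
        ≤ (η * M / c ^ i + (∑ j ∈ Finset.range i, (1 / c) ^ j) * B)
          * cmpW n γ γ' ε (k - i) x := by
      intro i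
      induction i with
      | zero =>
        intro _ x hx hxρ
        have hpos : 0 < ‖x‖ := norm_pos_iff.2 hx
        have hb := (h2 x hx hxρ).trans (mul_le_mul_of_nonneg_left (hMle x hx hxρ) hη0)
        have e : cmpW n γ γ' ε 0 x = ‖x‖ ^ (2 * k) * cmpW n γ γ' ε k x := by
          unfold cmpW
          have : ∀ g : ℝ, ‖x‖ ^ (-g - 2 * ((0 : ℕ) : ℝ))
              = ‖x‖ ^ (2 * k) * ‖x‖ ^ (-g - 2 * (k : ℝ)) := by
            intro g
            rw [← Real.rpow_natCast, ← Real.rpow_add hpos]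
            congr 1; push_cast; ring
          rw [this, this]; ring
        rw [e] at hb
        have h5 : 0 < ‖x‖ ^ (2 * k) := by positivity
        simp only [Nat.sub_zero, pow_zero, div_one, Finset.range_zero, Finset.sum_empty, zero_mul,
          add_zero]
        refine le_of_mul_le_mul_left ?_ h5
        linarith
      | succ i ih =>
        intro hi x hx hxρ
        have e : k - i = k - (i + 1) + 1 := by omega
        have ih' := ih (by omega)
        rw [e] at ih'
        have hSi : 0 ≤ ∑ j ∈ Finset.range i, (1 / c) ^ j :=
          Finset.sum_nonneg fun _ _ => by positivity
        have key := comparison (v := iterLap (k - (i + 1)) φ) (W := cmpW n γ γ' ε (k - (i + 1)))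
          (W' := cmpW n γ γ' ε (k - (i + 1) + 1)) (B := B) (c := c) hρ
          (show 0 ≤ η * M / c ^ i + (∑ j ∈ Finset.range i, (1 / c) ^ j) * B by positivity) hB hc
          (hcd _ (by omega)) (fun y hy => contDiffAt_cmpW _ _ _ _ hy) (fun y hy => cmpW_pos hε _ hy)
          (fun y hy => cmpW_pos hε _ hy)
          (fun y hy hyρ => by rw [← iterLap_succ]; exact ih' y hy hyρ)
          (fun y hy => lap_cmpW_le (by omega) hε hγ hγ' hγn hγn' hc1 hc2 hy)
          (fun y hy => (h3 _ (by omega) y hy).trans (mul_le_mul_of_nonneg_left (by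
            unfold cmpW
            have : 0 ≤ ‖y‖ ^ (-γ' - 2 * ((k - (i + 1) : ℕ) : ℝ)) := by positivity
            have := mul_nonneg hε.le this
            linarith) hB))
          (hlim _ (by omega)) x hx hxρ
        refine key.trans (le_of_eq ?_)
        congr 1
        rw [Finset.sum_range_succ', pow_zero, pow_succ,
          Finset.sum_congr rfl fun j _ => pow_succ (1 / c) j, ← Finset.sum_mul]
        field_simp
        ring
    have hfin : M ≤ 2 * S * B := by
      rcases hMz with h | ⟨z, hz0, hzρ, hz⟩
      · rw [h]; positivity
      have h5 := hind k le_rfl z hz0 hzρ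
      rw [Nat.sub_self, iterLap_zero] at h5
      rw [← div_le_iff₀ (cmpW_pos hε 0 hz0), hz] at h5
      have h6 : η * M / c ^ k ≤ M / 2 := by
        rw [div_le_iff₀ (by positivity)]
        have := mul_le_mul_of_nonneg_right hη hM0
        linarith
      linarith
    intro x hx hxρ
    exact (hMle x hx hxρ).trans (mul_le_mul_of_nonneg_right hfin (cmpW_pos hε 0 hx).le)
  intro x hx hxρ
  have hlim : Tendsto (fun ε : ℝ => 2 * S * B * cmpW n γ γ' ε 0 x) (𝓝[>] 0)
      (𝓝 (2 * S * B * cmpW n γ γ' 0 0 x)) := by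
    have : Continuous fun ε : ℝ => 2 * S * B * cmpW n γ γ' ε 0 x := by
      unfold cmpW; fun_prop
    exact (this.tendsto 0).mono_left nhdsWithin_le_nhds
  have := ge_of_tendsto hlim (by
    filter_upwards [self_mem_nhdsWithin] with ε hε using main ε hε x hx hxρ)
  simpa [cmpW] using this

end Maximum

/-! ### Assembly of the estimate -/

section Assembly

set_option maxSynthPendingDepth 3

open scoped ContDiff

variable {n : ℕ}

lemma le_of_ae_le_of_isOpen {f g : Eu n → ℝ} {U : Set (Eu n)} (hU : IsOpen U)
    (hf : ContinuousOn f U) (hg : ContinuousOn g U)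
    (h : ∀ᵐ x ∂volume.restrict U, f x ≤ g x) : ∀ x ∈ U, f x ≤ g x := by
  have hae : (fun x => max (f x) (g x)) =ᵐ[volume.restrict U] g := by
    filter_upwards [h] with x hx using max_eq_right hx
  have := Measure.eqOn_open_of_ae_eq hae hU (hf.sup hg) hg
  intro x hx
  exact max_eq_right_iff.1 (this hx)

/-- Hölder's inequality on a ball. -/
lemma integral_abs_le_rpow {p : ℝ} (hp : 1 < p) (δ : ℝ) :
    ∃ C : ℝ, 0 ≤ C ∧ ∀ φ : Eu n → ℝ,
      AEStronglyMeasurable φ (volume.restrict (ball (0 : Eu n) δ)) →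
      IntegrableOn (fun x => |φ x| ^ p) (ball (0 : Eu n) δ) →
      IntegrableOn (fun x => |φ x|) (ball (0 : Eu n) δ) ∧
      ∫ x in ball (0 : Eu n) δ, |φ x| ≤ C * (∫ x in ball (0 : Eu n) δ, |φ x| ^ p) ^ (1 / p) := by
  have hpq := Real.HolderConjugate.conjExponent hp
  set q := p.conjExponent
  have : IsFiniteMeasure (volume.restrict (ball (0 : Eu n) δ)) :=
    isFiniteMeasure_restrict.2 measure_ball_lt_top.ne
  refine ⟨(∫ _ in ball (0 : Eu n) δ, (1 : ℝ) ^ q) ^ (1 / q),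
    Real.rpow_nonneg (integral_nonneg fun _ => by positivity) _, fun φ hm hi => ?_⟩
  have hmem : MemLp φ (ENNReal.ofReal p) (volume.restrict (ball (0 : Eu n) δ)) := by
    have h0 : ENNReal.ofReal p ≠ 0 := by simpa using by linarith
    rw [← integrable_norm_rpow_iff hm h0 ENNReal.ofReal_ne_top,
      ENNReal.toReal_ofReal (by linarith)]
    exact hi
  refine ⟨(hmem.integrable (by simpa using hp.le)).abs, ?_⟩
  have := integral_mul_le_Lp_mul_Lq_of_nonneg (μ := volume.restrict (ball (0 : Eu n) δ)) hpq
    (f := fun x => |φ x|) (g := fun _ => (1 : ℝ)) (Eventually.of_forall fun _ => abs_nonneg _)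
    (Eventually.of_forall fun _ => zero_le_one) hmem.abs (memLp_const 1)
  rw [mul_comm] at this
  simpa using this

lemma isOpen_punctured (δ : ℝ) : IsOpen (ball (0 : Eu n) δ \ {0}) :=
  isOpen_ball.sdiff isClosed_singleton

lemma contDiffAt_of_punctured {φ : Eu n → ℝ} {δ : ℝ} {N : ℕ}
    (hφ : ContDiffOn ℝ N φ (ball (0 : Eu n) δ \ {0})) {x : Eu n} (hx0 : x ≠ 0) (hx : ‖x‖ < δ) :
    ContDiffAt ℝ N φ x :=
  hφ.contDiffAt ((isOpen_punctured δ).mem_nhds ⟨by simpa using hx, hx0⟩)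

/-- The equation with `|h| ≤ L`, `|V| ≤ μ ‖x‖^{-2k}` gives a differential inequality which holds
everywhere, by continuity. -/
lemma pointwise_ineq {k : ℕ} {L μ δ : ℝ} {h V φ : Eu n → ℝ}
    (hh : ∀ᵐ x ∂(volume.restrict (ball (0 : Eu n) δ)), |h x| ≤ L)
    (hV : ∀ x ∈ ball (0 : Eu n) δ \ {0}, |V x| ≤ μ * ‖x‖ ^ (-(2 * (k : ℝ))))
    (hφ : ContDiffOn ℝ (2 * k : ℕ) φ (ball (0 : Eu n) δ \ {0}))
    (heq : ∀ᵐ x ∂(volume.restrict (ball (0 : Eu n) δ \ {0})),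
      iterLap k φ x + h x * φ x - V x * φ x = 0) :
    ∀ x, x ≠ 0 → ‖x‖ < δ →
      ‖x‖ ^ (2 * k) * |iterLap k φ x| ≤ (L * ‖x‖ ^ (2 * k) + μ) * |φ x| := by
  have hU := isOpen_punctured (n := n) δ
  have key := le_of_ae_le_of_isOpen (U := ball (0 : Eu n) δ \ {0})
    (f := fun x => ‖x‖ ^ (2 * k) * |iterLap k φ x|)
    (g := fun x => (L * ‖x‖ ^ (2 * k) + μ) * |φ x|) hU ?_ ?_ ?_
  · intro x hx0 hx
    exact key x ⟨by simpa using hx, hx0⟩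
  · refine (continuous_norm.pow _).continuousOn.mul (ContinuousOn.abs fun x hx => ?_)
    exact ((contDiffAt_iterLap k (m := 0) (hφ.contDiffAt (hU.mem_nhds hx))
      (by omega)).continuousAt).continuousWithinAt
  · exact ((continuous_const.mul (continuous_norm.pow _)).add continuous_const).continuousOn.mul
      hφ.continuousOn.abs
  · have hh' : ∀ᵐ x ∂(volume.restrict (ball (0 : Eu n) δ \ {0})), |h x| ≤ L :=
      ae_restrict_of_ae_restrict_of_subset Set.sdiff_subset hh
    filter_upwards [hh', heq, ae_restrict_mem hU.measurableSet] with x h1 h2 hx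
    have hpos : 0 < ‖x‖ := norm_pos_iff.2 hx.2
    have h3 := hV x hx
    have e : ‖x‖ ^ (2 * k) * ‖x‖ ^ (-(2 * (k : ℝ))) = 1 := by
      rw [← Real.rpow_natCast, ← Real.rpow_add hpos]
      push_cast
      simp
    have hpk : 0 < ‖x‖ ^ (2 * k) := by positivity
    have h4 : ‖x‖ ^ (2 * k) * |V x| ≤ μ := by
      have := mul_le_mul_of_nonneg_left h3 hpk.le
      linear_combination this + μ * e
    have h5 : |iterLap k φ x| ≤ (|h x| + |V x|) * |φ x| := by
      have : iterLap k φ x = (V x - h x) * φ x := by linarith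
      rw [this, abs_mul]
      refine mul_le_mul_of_nonneg_right ?_ (abs_nonneg _)
      exact (abs_sub _ _).trans (by linarith)
    calc ‖x‖ ^ (2 * k) * |iterLap k φ x|
        ≤ ‖x‖ ^ (2 * k) * ((|h x| + |V x|) * |φ x|) := mul_le_mul_of_nonneg_left h5 hpk.le
      _ = (|h x| * ‖x‖ ^ (2 * k) + ‖x‖ ^ (2 * k) * |V x|) * |φ x| := by ring
      _ ≤ (L * ‖x‖ ^ (2 * k) + μ) * |φ x| := by gcongr

/-- The interior estimate on balls of radius comparable to the distance from the origin; the
rescaled potential is bounded there, uniformly up to the puncture. -/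
lemma local_bound {k : ℕ} (hk : 1 ≤ k) (hn : 2 * k < n) {L μ δ₁ δ₂ : ℝ} (hL : 0 ≤ L) (hμ : 0 ≤ μ)
    (hδ₁ : 0 < δ₁) (hδ : δ₁ < δ₂) :
    ∃ κ C : ℝ, 0 < κ ∧ κ ≤ 1 / 12 ∧ κ * δ₁ ≤ (δ₂ - δ₁) / 6 ∧ 0 < C ∧ ∀ φ : Eu n → ℝ,
      ContDiffOn ℝ (2 * k : ℕ) φ (ball (0 : Eu n) δ₂ \ {0}) →
      (∀ x, x ≠ 0 → ‖x‖ < δ₂ →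
        ‖x‖ ^ (2 * k) * |iterLap k φ x| ≤ (L * ‖x‖ ^ (2 * k) + μ) * |φ x|) →
      ∀ l < 2 * k, ∀ x, x ≠ 0 → ‖x‖ ≤ δ₁ →
        ‖x‖ ^ l * ‖iteratedFDeriv ℝ l φ x‖
          ≤ C * ((‖x‖ ^ n)⁻¹ * ∫ y in closedBall x (κ * ‖x‖), |φ y|) := by
  have hδ₂ : 0 < δ₂ := hδ₁.trans hδ
  obtain ⟨C, hC, hest⟩ := absorb_scaled hk hn (Λ := L * δ₂ ^ (2 * k) + μ) (by positivity)
  have hd : 0 < δ₂ - δ₁ := by linarith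
  set κ := min (1 / 12) ((δ₂ - δ₁) / (6 * δ₁)) with hκ
  have hκ0 : 0 < κ := lt_min (by norm_num) (by positivity)
  have hκ1 : κ ≤ 1 / 12 := min_le_left _ _
  have hκ2 : κ * δ₁ ≤ (δ₂ - δ₁) / 6 := by
    have : κ ≤ (δ₂ - δ₁) / (6 * δ₁) := min_le_right _ _
    rw [le_div_iff₀ (by positivity)] at this
    linarith
  refine ⟨κ, C * (κ ^ n)⁻¹ * (κ ^ (2 * k))⁻¹, hκ0, hκ1, hκ2, by positivity, ?_⟩
  intro φ hφ hineq l hl x hx0 hx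
  have hpos : 0 < ‖x‖ := norm_pos_iff.2 hx0
  have hsub : ∀ y ∈ ball x (3 * (κ * ‖x‖)), y ≠ 0 ∧ ‖y‖ < δ₂ ∧ κ * ‖x‖ ≤ ‖y‖ := by
    intro y hy
    rw [mem_ball, dist_eq_norm] at hy
    have h1 := norm_sub_norm_le x y
    have h2 := norm_sub_norm_le y x
    rw [norm_sub_rev] at h1
    have h3 : κ * ‖x‖ ≤ 1 / 12 * ‖x‖ := mul_le_mul_of_nonneg_right hκ1 hpos.le
    have h4 : κ * ‖x‖ ≤ κ * δ₁ := mul_le_mul_of_nonneg_left hx hκ0.le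
    have h5 : 3 / 4 * ‖x‖ ≤ ‖y‖ := by linarith
    exact ⟨norm_pos_iff.1 (by linarith), by linarith, by linarith⟩
  have hmain := hest φ x (κ * ‖x‖) (by positivity)
    (hφ.mono fun y hy => ⟨by simpa using (hsub y hy).2.1, (hsub y hy).1⟩)
    (fun y hy => by
      obtain ⟨hy0, hy1, hy2⟩ := hsub y hy
      have h1 : (κ * ‖x‖) ^ (2 * k) ≤ ‖y‖ ^ (2 * k) := by gcongr
      calc (κ * ‖x‖) ^ (2 * k) * |iterLap k φ y| ≤ ‖y‖ ^ (2 * k) * |iterLap k φ y| := by gcongr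
        _ ≤ (L * ‖y‖ ^ (2 * k) + μ) * |φ y| := hineq y hy0 hy1
        _ ≤ (L * δ₂ ^ (2 * k) + μ) * |φ y| := by gcongr) l hl
  have hκl : κ ^ (2 * k) ≤ κ ^ l := pow_le_pow_of_le_one hκ0.le (by linarith) hl.le
  have hκp : 0 < κ ^ (2 * k) := by positivity
  have h5 : κ ^ (2 * k) * (‖x‖ ^ l * ‖iteratedFDeriv ℝ l φ x‖)
      ≤ (κ * ‖x‖) ^ l * ‖iteratedFDeriv ℝ l φ x‖ := by
    rw [mul_pow, mul_assoc]
    gcongr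
  refine le_of_mul_le_mul_left (h5.trans (hmain.trans (le_of_eq ?_))) hκp
  rw [mul_pow, mul_inv]
  field_simp

lemma norm_bounds_of_mem {x y : Eu n} {κ : ℝ} (hκ : κ ≤ 1 / 12)
    (hy : y ∈ closedBall x (κ * ‖x‖)) : 11 / 12 * ‖x‖ ≤ ‖y‖ ∧ ‖y‖ ≤ 13 / 12 * ‖x‖ := by
  rw [mem_closedBall, dist_eq_norm] at hy
  have h1 := norm_sub_norm_le x y
  have h2 := norm_sub_norm_le y x
  rw [norm_sub_rev] at h1
  have h3 : κ * ‖x‖ ≤ 1 / 12 * ‖x‖ := mul_le_mul_of_nonneg_right hκ (norm_nonneg x)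
  constructor <;> linarith

lemma ball_mass_le {γ A ρ κ : ℝ} (hγ : 0 < γ) (hA : 0 ≤ A) (hκ0 : 0 ≤ κ) (hκ : κ ≤ 1 / 12)
    {φ : Eu n → ℝ} {x : Eu n} (hx0 : x ≠ 0) (hx : ‖x‖ ≤ ρ / 2)
    (hi : IntegrableOn (fun y => |φ y|) (closedBall x (κ * ‖x‖)))
    (hφ : ∀ y, y ≠ 0 → ‖y‖ ≤ ρ → |φ y| ≤ A * ‖y‖ ^ (-γ)) :
    ∫ y in closedBall x (κ * ‖x‖), |φ y|
      ≤ A * (2 ^ γ * ‖x‖ ^ (-γ)) * (‖x‖ ^ n * volume.real (ball (0 : Eu n) 1)) := by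
  have hpos : 0 < ‖x‖ := norm_pos_iff.2 hx0
  have hball : ∀ y ∈ closedBall x (κ * ‖x‖), |φ y| ≤ A * (2 ^ γ * ‖x‖ ^ (-γ)) := by
    intro y hy
    have hb := norm_bounds_of_mem hκ hy
    have hy0 : y ≠ 0 := norm_pos_iff.1 (by linarith)
    refine (hφ y hy0 (by linarith)).trans ?_
    have h2 : ‖y‖ ^ (-γ) ≤ (‖x‖ / 2) ^ (-γ) :=
      Real.rpow_le_rpow_of_nonpos (by positivity) (by linarith) (by linarith)
    have e : (‖x‖ / 2) ^ (-γ) = 2 ^ γ * ‖x‖ ^ (-γ) := by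
      rw [Real.div_rpow hpos.le (by norm_num), Real.rpow_neg (by norm_num : (0 : ℝ) ≤ 2)]
      field_simp
    rw [← e]
    exact mul_le_mul_of_nonneg_left h2 hA
  have hvol : volume.real (closedBall x (κ * ‖x‖))
      ≤ ‖x‖ ^ n * volume.real (ball (0 : Eu n) 1) := by
    rw [Measure.addHaar_real_closedBall _ _ (by positivity), finrank_euclideanSpace_fin]
    have h1 : κ * ‖x‖ ≤ ‖x‖ := by nlinarith
    gcongr
  calc ∫ y in closedBall x (κ * ‖x‖), |φ y|
      ≤ ∫ _ in closedBall x (κ * ‖x‖), A * (2 ^ γ * ‖x‖ ^ (-γ)) :=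
        setIntegral_mono_on hi (integrableOn_const measure_closedBall_lt_top.ne)
          measurableSet_closedBall hball
    _ = A * (2 ^ γ * ‖x‖ ^ (-γ)) * volume.real (closedBall x (κ * ‖x‖)) := by
        rw [setIntegral_const, smul_eq_mul, mul_comm]
    _ ≤ _ := mul_le_mul_of_nonneg_left hvol (by positivity)

set_option maxHeartbeats 1000000 in
/-- The conclusion, from the differential inequality, for a potential small in terms of the
constant `c` of the comparison functions. -/
lemma apriori {k : ℕ} (hk : 1 ≤ k) (hn : 2 * k < n) {L : ℝ} (hL : 0 < L)
    {δ₁ δ₂ : ℝ} (hδ₁ : 0 < δ₁) (hδ : δ₁ < δ₂) {p : ℝ} (hp : 1 < p)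
    {γ γ' c : ℝ} (hγ : 0 < γ) (hγ' : 0 < γ') (hγn : γ < n - 2 * k) (hγn' : γ' < n - 2 * k)
    (hσ : (n : ℝ) / 2 - k < γ') (hc : 0 < c) (hc1 : c ≤ γ * (n - 2 * k - γ))
    (hc2 : c ≤ γ' * (n - 2 * k - γ')) :
    ∃ C : ℝ, 0 < C ∧ ∀ φ : Eu n → ℝ,
      ContDiffOn ℝ (2 * k : ℕ) φ (ball (0 : Eu n) δ₂ \ {0}) →
      IntegrableOn (fun x => |φ x| ^ p) (ball (0 : Eu n) δ₂) →
      (∀ x, x ≠ 0 → ‖x‖ < δ₂ →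
        ‖x‖ ^ (2 * k) * |iterLap k φ x| ≤ (L * ‖x‖ ^ (2 * k) + c ^ k / 4) * |φ x|) →
      (∀ j ≤ k, IntegrableOn (fun x => ‖iteratedFDeriv ℝ j φ x‖ ^ 2) (ball (0 : Eu n) δ₂)) →
      ∀ l < 2 * k, ∀ x, x ≠ 0 → ‖x‖ ≤ δ₁ →
        ‖x‖ ^ γ * (‖x‖ ^ l * ‖iteratedFDeriv ℝ l φ x‖)
          ≤ C * (∫ y in ball (0 : Eu n) δ₂, |φ y| ^ p) ^ (1 / p) := by
  have hδ₂ : 0 < δ₂ := hδ₁.trans hδ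
  have hn1 : (1 : ℝ) ≤ n := by exact_mod_cast (by omega : 1 ≤ n)
  have hμ : 0 < c ^ k / 4 := by positivity
  obtain ⟨κ, C₀, hκ0, hκ, hκδ, hC₀, hloc⟩ := local_bound hk hn hL.le hμ.le hδ₁ hδ
  obtain ⟨Cp, hCp, hHol⟩ := integral_abs_le_rpow (n := n) hp δ₂
  -- Below the radius `ρ` the bounded potential is as small as the singular one.
  set ρ := min δ₁ (min 1 (c ^ k / 4 / L)) with hρdef
  have hρ : 0 < ρ := lt_min hδ₁ (lt_min one_pos (by positivity))
  have hρδ : ρ ≤ δ₁ := min_le_left _ _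
  have hρ1 : ρ ≤ 1 := (min_le_right _ _).trans (min_le_left _ _)
  have hρL : L * ρ ^ (2 * k) ≤ c ^ k / 4 := by
    have h1 : ρ ≤ c ^ k / 4 / L := (min_le_right _ _).trans (min_le_right _ _)
    have h2 : ρ ^ (2 * k) ≤ ρ := pow_le_of_le_one hρ.le hρ1 (by omega)
    have h3 := h2.trans h1
    rwa [le_div_iff₀ hL, mul_comm] at h3
  set K₁ := C₀ * (((ρ / 2) ^ n)⁻¹ * Cp) with hK₁
  have hK₁0 : 0 ≤ K₁ := by positivity
  set S := ∑ j ∈ Finset.range k, (1 / c) ^ j with hS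
  have hS0 : 0 ≤ S := Finset.sum_nonneg fun _ _ => by positivity
  set A := 2 * S * ((n : ℝ) ^ k * K₁ * ρ ^ γ) with hA
  have hA0 : 0 ≤ A := by positivity
  set v := volume.real (ball (0 : Eu n) 1) with hv
  have hv0 : 0 ≤ v := measureReal_nonneg
  refine ⟨δ₁ ^ γ * K₁ + C₀ * (2 ^ γ * A * v) + 1, by positivity, ?_⟩
  intro φ hφ hint hineq hE l hl
  set E := (∫ y in ball (0 : Eu n) δ₂, |φ y| ^ p) ^ (1 / p) with hEdef
  have hE0 : 0 ≤ E := Real.rpow_nonneg (integral_nonneg fun _ => by positivity) _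
  have hmeas : AEStronglyMeasurable φ (volume.restrict (ball (0 : Eu n) δ₂)) := by
    have h1 : AEStronglyMeasurable φ (volume.restrict (ball (0 : Eu n) δ₂ \ {0})) :=
      hφ.continuousOn.aestronglyMeasurable (isOpen_punctured δ₂).measurableSet
    have : Nonempty (Fin n) := ⟨⟨0, by omega⟩⟩
    rwa [Measure.restrict_congr_set (sdiff_null_ae_eq_self (measure_singleton 0))] at h1
  obtain ⟨hi1, hHφ⟩ := hHol φ hmeas hint
  have hsub : ∀ x : Eu n, ‖x‖ ≤ δ₁ → closedBall x (κ * ‖x‖) ⊆ ball 0 δ₂ := by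
    intro x hx y hy
    rw [mem_closedBall, dist_eq_norm] at hy
    have h2 := norm_sub_norm_le y x
    have h4 : κ * ‖x‖ ≤ κ * δ₁ := mul_le_mul_of_nonneg_left hx hκ0.le
    rw [mem_ball_zero_iff]
    linarith
  -- Away from the puncture the interior estimate alone suffices.
  have hfar : ∀ l < 2 * k, ∀ x, x ≠ 0 → ρ / 2 ≤ ‖x‖ → ‖x‖ ≤ δ₁ →
      ‖x‖ ^ l * ‖iteratedFDeriv ℝ l φ x‖ ≤ K₁ * E := by
    intro l hl x hx0 hxρ hx
    refine (hloc φ hφ hineq l hl x hx0 hx).trans ?_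
    have h1 : ∫ y in closedBall x (κ * ‖x‖), |φ y| ≤ Cp * E :=
      (setIntegral_mono_set hi1 (Eventually.of_forall fun _ => abs_nonneg _)
        (hsub x hx).eventuallyLE).trans hHφ
    calc C₀ * ((‖x‖ ^ n)⁻¹ * ∫ y in closedBall x (κ * ‖x‖), |φ y|)
        ≤ C₀ * (((ρ / 2) ^ n)⁻¹ * (Cp * E)) := by gcongr
      _ = K₁ * E := by rw [hK₁]; ring
  have hLap : ∀ j < k, ∀ x, x ≠ 0 → ‖x‖ ≤ δ₁ →
      ‖x‖ ^ (2 * j) * |iterLap j φ x|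
        ≤ (n : ℝ) ^ k * (‖x‖ ^ (2 * j) * ‖iteratedFDeriv ℝ (2 * j) φ x‖) := by
    intro j hj x hx0 hx
    have h1 := abs_iterLap_le j (u := φ) (x := x)
      ((contDiffAt_of_punctured hφ hx0 (hx.trans_lt hδ)).of_le
        (by exact_mod_cast (by omega : 2 * j ≤ 2 * k)))
    have h2 : (n : ℝ) ^ j ≤ (n : ℝ) ^ k := pow_le_pow_right₀ hn1 hj.le
    calc ‖x‖ ^ (2 * j) * |iterLap j φ x|
        ≤ ‖x‖ ^ (2 * j) * ((n : ℝ) ^ k * ‖iteratedFDeriv ℝ (2 * j) φ x‖) := by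
          refine mul_le_mul_of_nonneg_left (h1.trans ?_) (by positivity)
          gcongr
      _ = _ := by ring
  have hsplit : ∀ (g : ℝ) (j : ℕ) (x : Eu n), x ≠ 0 →
      ‖x‖ ^ (2 * j) * ‖x‖ ^ (-g - 2 * (j : ℝ)) = ‖x‖ ^ (-g) := by
    intro g j x hx0
    rw [← Real.rpow_natCast, ← Real.rpow_add (norm_pos_iff.2 hx0)]
    congr 1
    push_cast
    ring
  obtain ⟨Cm, hCm, hmass⟩ := mass_decay hk hn hδ₂ hφ hE
  have hsup := sup_bound (φ := φ) (ρ := ρ) (σ := (n : ℝ) / 2 - k) (η := c ^ k / 2)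
    (B := (n : ℝ) ^ k * K₁ * ρ ^ γ * E) hγ hγ' hγn hγn' hσ hc hc1 hc2 (by positivity) le_rfl hρ
    (by positivity) hk
    (fun x hx0 hx => contDiffAt_of_punctured hφ hx0 (by linarith))
    (fun x hx0 hx => (hineq x hx0 (by linarith)).trans (by
      refine mul_le_mul_of_nonneg_right ?_ (abs_nonneg _)
      have : L * ‖x‖ ^ (2 * k) ≤ L * ρ ^ (2 * k) := by gcongr
      linarith))
    (fun j hj x hx => by
      have hx0 : x ≠ 0 := norm_pos_iff.1 (hx ▸ hρ)
      have hpos : 0 < ‖x‖ ^ (2 * j) := by have := norm_pos_iff.2 hx0; positivity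
      refine le_of_mul_le_mul_left ?_ hpos
      refine (hLap j hj x hx0 (by linarith)).trans ?_
      have h1 := mul_le_mul_of_nonneg_left
        (hfar (2 * j) (by omega) x hx0 (by linarith) (by linarith))
        (show 0 ≤ (n : ℝ) ^ k by positivity)
      refine h1.trans (le_of_eq ?_)
      have e1 := hsplit γ j x hx0
      have e2 : ρ ^ γ * ρ ^ (-γ) = 1 := by
        rw [← Real.rpow_add hρ, add_neg_cancel, Real.rpow_zero]
      calc (n : ℝ) ^ k * (K₁ * E) = (n : ℝ) ^ k * K₁ * E * (ρ ^ γ * ρ ^ (-γ)) := by rw [e2]; ring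
        _ = (n : ℝ) ^ k * K₁ * ρ ^ γ * E * ρ ^ (-γ) := by ring
        _ = _ := by rw [← hx, ← e1]; ring)
    -- A priori growth at the puncture: the mass decay on annuli fed into the interior estimate.
    (fun j hj => by
      refine ⟨(n : ℝ) ^ k * (C₀ * Cm), min δ₁ (3 * δ₂ / 8), lt_min hδ₁ (by positivity),
        fun x hx0 hx => ?_⟩
      have hxδ : ‖x‖ ≤ δ₁ := hx.trans (min_le_left _ _)
      have hxδ' : ‖x‖ ≤ 3 * δ₂ / 8 := hx.trans (min_le_right _ _)
      have hpos : 0 < ‖x‖ := norm_pos_iff.2 hx0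
      have hposj : 0 < ‖x‖ ^ (2 * j) := by positivity
      refine le_of_mul_le_mul_left ?_ hposj
      refine (hLap j hj x hx0 hxδ).trans ?_
      have hann : ∫ y in closedBall x (κ * ‖x‖), |φ y|
          ≤ ∫ y in ann n (2 / 3 * ‖x‖) (2 * (2 / 3 * ‖x‖)), |φ y| := by
        refine setIntegral_mono_set (hi1.mono_set fun y hy => ?_)
          (Eventually.of_forall fun _ => abs_nonneg _) (LE.le.eventuallyLE fun y hy => ?_)
        · have := hy.2
          rw [mem_ball_zero_iff]
          linarith
        · have := norm_bounds_of_mem hκ hy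
          exact ⟨by linarith, by linarith⟩
      have hm := hann.trans (hmass (2 / 3 * ‖x‖) (by positivity) (by linarith))
      have hexp : (2 / 3 * ‖x‖) ^ ((n : ℝ) / 2 + k) ≤ ‖x‖ ^ ((n : ℝ) / 2 + k) :=
        Real.rpow_le_rpow (by positivity) (by linarith) (by positivity)
      have e3 : (‖x‖ ^ n)⁻¹ * ‖x‖ ^ ((n : ℝ) / 2 + k) = ‖x‖ ^ (-((n : ℝ) / 2 - k)) := by
        rw [← Real.rpow_natCast, ← Real.rpow_neg hpos.le, ← Real.rpow_add hpos]
        congr 1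
        ring
      calc (n : ℝ) ^ k * (‖x‖ ^ (2 * j) * ‖iteratedFDeriv ℝ (2 * j) φ x‖)
          ≤ (n : ℝ) ^ k * (C₀ * ((‖x‖ ^ n)⁻¹ * ∫ y in closedBall x (κ * ‖x‖), |φ y|)) := by
            exact mul_le_mul_of_nonneg_left (hloc φ hφ hineq (2 * j) (by omega) x hx0 hxδ)
              (by positivity)
        _ ≤ (n : ℝ) ^ k * (C₀ * ((‖x‖ ^ n)⁻¹ * (Cm * ‖x‖ ^ ((n : ℝ) / 2 + k)))) := by
            gcongr
            exact hm.trans (by gcongr)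
        _ = (n : ℝ) ^ k * (C₀ * Cm) * ((‖x‖ ^ n)⁻¹ * ‖x‖ ^ ((n : ℝ) / 2 + k)) := by ring
        _ = _ := by rw [e3, ← hsplit _ j x hx0]; ring)
  have hsup' : ∀ x, x ≠ 0 → ‖x‖ ≤ ρ → |φ x| ≤ A * E * ‖x‖ ^ (-γ) := by
    intro x hx0 hx
    refine (hsup x hx0 hx).trans (le_of_eq ?_)
    rw [hA]
    ring
  intro x hx0 hx
  have hpos : 0 < ‖x‖ := norm_pos_iff.2 hx0
  have hγp : 0 < ‖x‖ ^ γ := by positivity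
  rcases le_total (ρ / 2) ‖x‖ with hxρ | hxρ
  · have h1 : ‖x‖ ^ γ ≤ δ₁ ^ γ := Real.rpow_le_rpow hpos.le hx hγ.le
    calc ‖x‖ ^ γ * (‖x‖ ^ l * ‖iteratedFDeriv ℝ l φ x‖) ≤ δ₁ ^ γ * (K₁ * E) := by
          exact mul_le_mul h1 (hfar l hl x hx0 hxρ hx) (by positivity) (by positivity)
      _ = δ₁ ^ γ * K₁ * E := by ring
      _ ≤ _ := by
          refine mul_le_mul_of_nonneg_right ?_ hE0
          have : 0 ≤ C₀ * (2 ^ γ * A * v) := by positivity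
          linarith
  · have hI := ball_mass_le hγ (show 0 ≤ A * E by positivity) hκ0.le hκ hx0 hxρ
      (hi1.mono_set (hsub x hx)) hsup'
    rw [← hv] at hI
    have e2 : ‖x‖ ^ γ * ‖x‖ ^ (-γ) = 1 := by
      rw [← Real.rpow_add hpos, add_neg_cancel, Real.rpow_zero]
    have hpn : 0 < ‖x‖ ^ n := by positivity
    calc ‖x‖ ^ γ * (‖x‖ ^ l * ‖iteratedFDeriv ℝ l φ x‖)
        ≤ ‖x‖ ^ γ * (C₀ * ((‖x‖ ^ n)⁻¹ * (A * E * (2 ^ γ * ‖x‖ ^ (-γ)) * (‖x‖ ^ n * v)))) := by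
          refine mul_le_mul_of_nonneg_left ((hloc φ hφ hineq l hl x hx0 hx).trans ?_) hγp.le
          gcongr
      _ = C₀ * (2 ^ γ * A * v) * E * ((‖x‖ ^ γ * ‖x‖ ^ (-γ)) * ((‖x‖ ^ n)⁻¹ * ‖x‖ ^ n)) := by ring
      _ = C₀ * (2 ^ γ * A * v) * E := by rw [e2, inv_mul_cancel₀ hpn.ne']; ring
      _ ≤ _ := by
          refine mul_le_mul_of_nonneg_right ?_ hE0
          have : 0 ≤ δ₁ ^ γ * K₁ := by positivity
          linarith

end Assembly

theorem stmt16 (n k : ℕ) (hk : 2 ≤ 2 * k) (hn : 2 * k < n) (L : ℝ) (hL : 0 < L)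
    (δ₁ δ₂ : ℝ) (hδ₁ : 0 < δ₁) (hδ : δ₁ < δ₂) (p : ℝ) (hp : 1 < p)
    (γ : ℝ) (hγ0 : 0 < γ) (hγ : γ < (n : ℝ) - 2 * k) :
    ∃ μ : ℝ, 0 < μ ∧ ∃ C : ℕ → ℝ, (∀ l < 2 * k, 0 < C l) ∧
      ∀ h : EuclideanSpace ℝ (Fin n) → ℝ, Measurable h →
        (∀ᵐ x ∂(MeasureTheory.volume.restrict (Metric.ball (0 : EuclideanSpace ℝ (Fin n)) δ₂)),
          |h x| ≤ L) →
      ∀ V : EuclideanSpace ℝ (Fin n) → ℝ, Measurable V →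
        (∀ x ∈ Metric.ball (0 : EuclideanSpace ℝ (Fin n)) δ₂ \ {0},
          |V x| ≤ μ * ‖x‖ ^ (-(2 * (k : ℝ)))) →
      ∀ φ : EuclideanSpace ℝ (Fin n) → ℝ,
        ContDiffOn ℝ (2 * k : ℕ) φ (Metric.ball (0 : EuclideanSpace ℝ (Fin n)) δ₂ \ {0}) →
        MeasureTheory.IntegrableOn (fun x => |φ x| ^ p)
          (Metric.ball (0 : EuclideanSpace ℝ (Fin n)) δ₂) →
        (∀ᵐ x ∂(MeasureTheory.volume.restrict
            (Metric.ball (0 : EuclideanSpace ℝ (Fin n)) δ₂ \ {0})),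
          iterLap k φ x + h x * φ x - V x * φ x = 0) →
        (∀ j ≤ k, MeasureTheory.IntegrableOn (fun x => ‖iteratedFDeriv ℝ j φ x‖ ^ 2)
          (Metric.ball (0 : EuclideanSpace ℝ (Fin n)) δ₂)) →
        ∀ l < 2 * k, ∀ x ∈ Metric.ball (0 : EuclideanSpace ℝ (Fin n)) δ₁ \ {0},
          ‖x‖ ^ (γ + (l : ℝ)) * ‖iteratedFDeriv ℝ l φ x‖
            ≤ C l * (∫ y in Metric.ball (0 : EuclideanSpace ℝ (Fin n)) δ₂, |φ y| ^ p) ^ (1 / p) := by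
  have hk1 : 1 ≤ k := by omega
  have hnk : (0 : ℝ) < n - 2 * k := by
    have : (2 * k : ℝ) < n := by exact_mod_cast hn
    linarith
  -- A second exponent, above the growth rate `n/2 - k` that finite energy allows.
  obtain ⟨γ', hγ'1, hγ'2⟩ : ∃ γ' : ℝ, (n : ℝ) / 2 - k < γ' ∧ γ' < n - 2 * k :=
    exists_between (by linarith)
  have hγ'0 : 0 < γ' := by linarith
  set c := min (γ * (n - 2 * k - γ)) (γ' * (n - 2 * k - γ')) with hcdef
  have hc : 0 < c := lt_min (mul_pos hγ0 (by linarith)) (mul_pos hγ'0 (by linarith))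
  obtain ⟨C, hC, hmain⟩ := apriori hk1 hn hL hδ₁ hδ hp hγ0 hγ'0 hγ hγ'2 hγ'1 hc
    (min_le_left _ _) (min_le_right _ _)
  refine ⟨c ^ k / 4, by positivity, fun _ => C, fun _ _ => hC, ?_⟩
  intro h _ hhL V _ hV φ hφ hint heq hE l hl x hx
  have hx0 : x ≠ 0 := hx.2
  have hxδ : ‖x‖ ≤ δ₁ := by
    have := hx.1
    rw [mem_ball_zero_iff] at this
    exact this.le
  have := hmain φ hφ hint (pointwise_ineq hhL hV hφ heq) hE l hl x hx0 hxδ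
  rwa [Real.rpow_add (norm_pos_iff.2 hx0), Real.rpow_natCast, mul_assoc]
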